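/- Let (ΛV,d) be a formal elliptic minimal Sullivan algebra over Q. Then dim_Q H^*(ΛV,d) ≥ 2^{dim V^odd − dim V^even}. (Since for a nilpotent space X the toral rank rk_0(X) is at most −χ_π(X) = dim V^odd − dim V^even, this yields the toral rank conjecture for formal elliptic spaces.) -/

import Mathlib

/-!
Commutative differential graded algebras over `ℚ`, (minimal) Sullivan algebras,
ellipticity and formality; cf. Amann–Zoller, "On the toral rank conjecture and
some consequences of new variants of formality".
-/

/-- A non-negatively graded commutative (in the graded sense) differential
graded algebra over `ℚ`. -/
structure CDGA : Type 1 where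
  carrier : Type
  [ringStr : Ring carrier]
  [algStr : Algebra ℚ carrier]
  /-- The grading, by `ℚ`-subspaces. -/
  grading : ℤ → Submodule ℚ carrier
  /-- The grading is an internal direct sum decomposition. -/
  internal : DirectSum.IsInternal grading
  one_mem : (1 : carrier) ∈ grading 0
  mul_mem : ∀ {i j : ℤ} {a b : carrier}, a ∈ grading i → b ∈ grading j → a * b ∈ grading (i + j)
  /-- Graded commutativity (Koszul signs). -/
  gcomm : ∀ {i j : ℤ} {a b : carrier}, a ∈ grading i → b ∈ grading j →
      a * b = ((-1 : ℚ) ^ (i * j)) • (b * a)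
  /-- Non-negative grading. -/
  nonneg : ∀ i : ℤ, i < 0 → grading i = ⊥
  /-- The differential. -/
  d : carrier →ₗ[ℚ] carrier
  d_mem : ∀ {i : ℤ} {a : carrier}, a ∈ grading i → d a ∈ grading (i + 1)
  d_sq : ∀ a : carrier, d (d a) = 0
  /-- Graded Leibniz rule. -/
  leibniz : ∀ {i : ℤ} {a : carrier}, a ∈ grading i → ∀ b : carrier,
      d (a * b) = d a * b + ((-1 : ℚ) ^ i) • (a * d b)

attribute [instance] CDGA.ringStr CDGA.algStr

/-- The cohomology of a cdga, as a `ℚ`-vector space. -/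
abbrev CDGA.Hspace (A : CDGA) : Type :=
  ↥(LinearMap.ker A.d) ⧸ ((LinearMap.range A.d).comap (LinearMap.ker A.d).subtype)

/-- The degree-`n` cocycles of a cdga, inside the cocycle subspace. -/
def CDGA.cocyclesAt (A : CDGA) (n : ℤ) : Submodule ℚ ↥(LinearMap.ker A.d) :=
  (A.grading n).comap (LinearMap.ker A.d).subtype

/-- The degree-`n` part of the cohomology of a cdga. -/
def CDGA.Hpiece (A : CDGA) (n : ℤ) : Submodule ℚ A.Hspace :=
  (A.cocyclesAt n).map ((LinearMap.range A.d).comap (LinearMap.ker A.d).subtype).mkQ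

/-- A morphism of cdgas: a degree-preserving algebra map commuting with the
differentials. -/
structure CDGAHom (A B : CDGA) where
  toFun : A.carrier →ₐ[ℚ] B.carrier
  map_grading : ∀ i : ℤ, ∀ x ∈ A.grading i, toFun x ∈ B.grading i
  comm_d : ∀ x : A.carrier, toFun (A.d x) = B.d (toFun x)

/-- A morphism of cdgas is a quasi-isomorphism if it induces a bijection on
cohomology. -/
def CDGAHom.IsQuasiIso {A B : CDGA} (f : CDGAHom A B) : Prop :=
  (∀ x : A.carrier, A.d x = 0 → f.toFun x ∈ LinearMap.range B.d →
      x ∈ LinearMap.range A.d) ∧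
  (∀ y : B.carrier, B.d y = 0 → ∃ x : A.carrier, A.d x = 0 ∧
      f.toFun x - y ∈ LinearMap.range B.d)

/-- Two cdgas are connected by a chain (zigzag) of cdga quasi-isomorphisms. -/
def CDGAConnected (A B : CDGA) : Prop :=
  Relation.EqvGen (fun X Y : CDGA => ∃ f : CDGAHom X Y, f.IsQuasiIso) A B

/-- A cdga is formal if it is connected to its cohomology algebra, equipped
with the zero differential, by a chain of cdga quasi-isomorphisms; equivalently
(as stated here), it is connected by a chain of cdga quasi-isomorphisms to a
cdga with zero differential. -/
def CDGA.IsFormal (A : CDGA) : Prop :=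
  ∃ B : CDGA, B.d = 0 ∧ CDGAConnected A B

/-- The monomial `∏ g x ^ e x` associated with a finitely supported exponent
function `e`, the product being taken in increasing order of the (linearly
ordered) index set. -/
def monomialIn {A : Type} [Ring A] {ι : Type} (lo : LinearOrder ι)
    (g : ι → A) (e : ι →₀ ℕ) : A :=
  letI := lo
  ((e.support.sort (· ≤ ·)).map fun x => g x ^ e x).prod

/-- A Sullivan algebra `(ΛV, d)`: the free graded-commutative algebra on a
simply connected graded vector space `V = V^{≥2}` of finite type.  Freeness is
expressed by the requirement that the admissible monomials (square-free in the
odd-degree generators) in a homogeneous basis of `V` form a `ℚ`-basis. -/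
structure SullivanAlgebra extends CDGA where
  /-- The space of generators, as a graded subspace. -/
  V : ℤ → Submodule ℚ carrier
  V_le : ∀ i : ℤ, V i ≤ grading i
  /-- Simple connectedness: `V = V^{≥2}`. -/
  V_lower : ∀ i : ℤ, i ≤ 1 → V i = ⊥
  /-- Finite type. -/
  V_findim : ∀ i : ℤ, FiniteDimensional ℚ ↥(V i)
  /-- `ΛV` is free graded-commutative on `V`. -/
  free : ∃ (ι : Type) (lo : LinearOrder ι) (deg : ι → ℤ) (g : ι → carrier),
    (∀ x : ι, g x ∈ V (deg x)) ∧
    (∀ i : ℤ, V i = Submodule.span ℚ (g '' {x : ι | deg x = i})) ∧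
    LinearIndependent ℚ
      (fun e : {e : ι →₀ ℕ // ∀ x : ι, Odd (deg x) → e x ≤ 1} =>
        monomialIn lo g e.1) ∧
    ⊤ ≤ Submodule.span ℚ
      (Set.range fun e : {e : ι →₀ ℕ // ∀ x : ι, Odd (deg x) → e x ≤ 1} =>
        monomialIn lo g e.1)

/-- The set of homogeneous elements of positive degree. -/
def CDGA.posSet (A : CDGA) : Set A.carrier :=
  {a : A.carrier | ∃ i : ℤ, 0 < i ∧ a ∈ A.grading i}

/-- The decomposable elements `Λ^{≥2}V = A⁺ · A⁺` of a connected cdga. -/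
def CDGA.decomposables (A : CDGA) : Submodule ℚ A.carrier :=
  Submodule.span ℚ
    {z : A.carrier | ∃ x ∈ A.posSet, ∃ y ∈ A.posSet, z = x * y}

/-- A Sullivan algebra is minimal if `d(V) ⊆ Λ^{≥2}V`. -/
def SullivanAlgebra.IsMinimal (A : SullivanAlgebra) : Prop :=
  ∀ i : ℤ, ∀ v ∈ A.V i, A.d v ∈ A.toCDGA.decomposables

/-- A Sullivan algebra is elliptic if both `V` and `H^*(ΛV, d)` are
finite-dimensional. -/
def SullivanAlgebra.Elliptic (A : SullivanAlgebra) : Prop :=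
  (∃ N : ℤ, ∀ i : ℤ, N ≤ i → A.V i = ⊥) ∧
  FiniteDimensional ℚ A.toCDGA.Hspace

/-- The total dimension of the odd-degree part of `V`. -/
noncomputable def SullivanAlgebra.oddDim (A : SullivanAlgebra) : ℕ :=
  finsum fun i : ℤ => if Odd i then Module.finrank ℚ ↥(A.V i) else 0

/-- The total dimension of the even-degree part of `V`. -/
noncomputable def SullivanAlgebra.evenDim (A : SullivanAlgebra) : ℕ :=
  finsum fun i : ℤ => if Even i then Module.finrank ℚ ↥(A.V i) else 0


set_option linter.unusedSectionVars false
set_option linter.deprecated false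

namespace TRC

/-! ### Homogeneous projections -/

section Proj

variable {M : Type} [AddCommGroup M] [Module ℚ M] {Z : ℤ → Submodule ℚ M}

/-- Projection to the homogeneous component of degree `n`. -/
noncomputable def proj (hZ : DirectSum.IsInternal Z) (n : ℤ) : M →ₗ[ℚ] M :=
  (Z n).subtype ∘ₗ (DirectSum.component ℚ ℤ (fun i => ↥(Z i)) n) ∘ₗ
    ((LinearEquiv.ofBijective (DirectSum.coeLinearMap Z) hZ).symm : M →ₗ[ℚ] _)

theorem proj_mem (hZ : DirectSum.IsInternal Z) (n : ℤ) (x : M) : proj hZ n x ∈ Z n := by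
  simp [proj]

theorem symm_of_mem (hZ : DirectSum.IsInternal Z) {n : ℤ} {x : M} (hx : x ∈ Z n) :
    (LinearEquiv.ofBijective (DirectSum.coeLinearMap Z) hZ).symm x
      = DirectSum.lof ℚ ℤ (fun i => ↥(Z i)) n ⟨x, hx⟩ := by
  apply (LinearEquiv.ofBijective (DirectSum.coeLinearMap Z) hZ).injective
  rw [LinearEquiv.apply_symm_apply]
  exact (DirectSum.coeLinearMap_lof Z n ⟨x, hx⟩).symm

theorem proj_same (hZ : DirectSum.IsInternal Z) {n : ℤ} {x : M} (hx : x ∈ Z n) :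
    proj hZ n x = x := by
  have := symm_of_mem hZ hx
  simp only [proj, LinearMap.comp_apply, LinearEquiv.coe_coe, this]
  simp [DirectSum.component.lof_self]

theorem proj_ne (hZ : DirectSum.IsInternal Z) {n m : ℤ} {x : M} (hx : x ∈ Z n) (h : n ≠ m) :
    proj hZ m x = 0 := by
  have := symm_of_mem hZ hx
  simp only [proj, LinearMap.comp_apply, LinearEquiv.coe_coe, this]
  simp [DirectSum.component.of, h]

theorem hom_induction (hZ : DirectSum.IsInternal Z) {p : M → Prop} (x : M)
    (hm : ∀ n, ∀ y ∈ Z n, p y) (h0 : p 0) (ha : ∀ y z, p y → p z → p (y + z)) : p x := by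
  have hx : x ∈ iSup Z := by rw [hZ.submodule_iSup_eq_top]; trivial
  exact Submodule.iSup_induction Z (motive := p) hx hm h0 ha

theorem linear_ext (hZ : DirectSum.IsInternal Z) {N : Type} [AddCommGroup N] [Module ℚ N]
    {f g : M →ₗ[ℚ] N} (h : ∀ n, ∀ y ∈ Z n, f y = g y) (x : M) : f x = g x := by
  refine hom_induction hZ (p := fun x => f x = g x) x h (by simp) ?_
  intro y z hy hz
  simp [hy, hz]

/-- An element is determined by its projections. -/
theorem eq_zero_of_proj (hZ : DirectSum.IsInternal Z) {x : M} (h : ∀ n, proj hZ n x = 0) :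
    x = 0 := by
  have : (LinearEquiv.ofBijective (DirectSum.coeLinearMap Z) hZ).symm x = 0 := by
    refine DFinsupp.ext fun n => ?_
    have := h n
    simp only [proj, LinearMap.comp_apply, LinearEquiv.coe_coe, Submodule.subtype_apply] at this
    exact Subtype.ext this
  simpa using this

/-- An element lies in any submodule that contains all its projections. -/
theorem mem_of_proj (hZ : DirectSum.IsInternal Z) {S : Submodule ℚ M} {x : M}
    (h : ∀ n, proj hZ n x ∈ S) : x ∈ S := by
  classical
  have key : ∀ y : DirectSum ℤ (fun i => ↥(Z i)), (∀ n, ((y n : Z n) : M) ∈ S) →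
      DirectSum.coeLinearMap Z y ∈ S := by
    intro y hy
    rw [DirectSum.coeLinearMap_eq_dfinsuppSum]
    exact Submodule.dfinsuppSum_mem _ _ _ (fun n _ => hy n)
  have := key ((LinearEquiv.ofBijective (DirectSum.coeLinearMap Z) hZ).symm x) (by
    intro n
    exact h n)
  have e : DirectSum.coeLinearMap Z ((LinearEquiv.ofBijective (DirectSum.coeLinearMap Z) hZ).symm x)
    = x := LinearEquiv.apply_symm_apply (LinearEquiv.ofBijective (DirectSum.coeLinearMap Z) hZ) x
  rwa [e] at this

/-- A map which shifts degrees commutes with projections. -/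
theorem proj_comm (hZ : DirectSum.IsInternal Z) {N : Type} [AddCommGroup N] [Module ℚ N]
    {Y : ℤ → Submodule ℚ N} (hY : DirectSum.IsInternal Y) (f : M →ₗ[ℚ] N) (k : ℤ)
    (hf : ∀ n, ∀ y ∈ Z n, f y ∈ Y (n + k)) (n : ℤ) (x : M) :
    f (proj hZ n x) = proj hY (n + k) (f x) := by
  refine linear_ext hZ (f := f ∘ₗ proj hZ n) (g := proj hY (n + k) ∘ₗ f) ?_ x
  intro m y hy
  by_cases h : m = n
  · subst h
    simp [proj_same hZ hy, proj_same hY (hf _ _ hy)]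
  · have : m + k ≠ n + k := by omega
    simp [proj_ne hZ hy h, proj_ne hY (hf _ _ hy) this]

theorem mem_iff_of_le_span (hZ : DirectSum.IsInternal Z) {κ : Type} (b : κ → M) (dg : κ → ℤ)
    (hb : ∀ k, b k ∈ Z (dg k)) (hs : ⊤ ≤ Submodule.span ℚ (Set.range b)) (n : ℤ) :
    Z n ≤ Submodule.span ℚ (b '' {k | dg k = n}) := by
  intro x hx
  have h1 : ∀ y ∈ Submodule.span ℚ (Set.range b),
      proj hZ n y ∈ Submodule.span ℚ (b '' {k | dg k = n}) := by
    intro y hy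
    induction hy using Submodule.span_induction with
    | mem y hy =>
      obtain ⟨k, rfl⟩ := hy
      by_cases h : dg k = n
      · rw [proj_same hZ (h ▸ hb k)]
        exact Submodule.subset_span ⟨k, h, rfl⟩
      · rw [proj_ne hZ (hb k) h]; exact Submodule.zero_mem _
    | zero => simp
    | add y z _ _ hy hz => rw [map_add]; exact Submodule.add_mem _ hy hz
    | smul c y _ hy => rw [map_smul]; exact Submodule.smul_mem _ _ hy
  have := h1 x (hs trivial)
  rwa [proj_same hZ hx] at this

end Proj

/-! ### Ordered monomials -/

section Mon

variable {ι : Type} [DecidableEq ι] {R : Type} [Ring R] [Algebra ℚ R]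

/-- Ordered monomials along a list. -/
def mon (l : List ι) (h : ι → R) (e : ι → ℕ) : R := (l.map fun x => h x ^ e x).prod

/-- The sign picked up when multiplying an ordered monomial by a generator. -/
def sgn (deg : ι → ℤ) (x : ι) (e : ι → ℕ) : List ι → ℚ
  | [] => 1
  | y :: l => if y = x then 1 else ((-1) ^ (deg x * deg y)) ^ e y * sgn deg x e l

/-- Commutation of the elements `h x` with Koszul signs. -/
def Koszul (deg : ι → ℤ) (h : ι → R) : Prop :=
  ∀ x y, h x * h y = ((-1 : ℚ) ^ (deg x * deg y)) • (h y * h x)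

theorem mul_pow_koszul {a b : R} {c : ℚ} (h : a * b = c • (b * a)) (k : ℕ) :
    a * b ^ k = c ^ k • (b ^ k * a) := by
  induction k with
  | zero => simp
  | succ k ih =>
    rw [pow_succ, ← mul_assoc, ih, smul_mul_assoc, mul_assoc, h, mul_smul_comm, smul_smul,
      ← mul_assoc, pow_succ]

theorem mul_mon {deg : ι → ℤ} {h : ι → R} (hk : Koszul deg h) (x : ι) (e : ι → ℕ) :
    ∀ l : List ι, l.Nodup → x ∈ l →
      h x * mon l h e = sgn deg x e l • mon l h (e + Pi.single x 1) := by
  intro l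
  induction l with
  | nil => simp
  | cons y l ih =>
    intro hn hx
    rw [List.nodup_cons] at hn
    by_cases hy : y = x
    · subst hy
      have : (l.map fun x => h x ^ e x) = l.map fun x => h x ^ ((e + Pi.single y 1 : ι → ℕ) x) := by
        apply List.map_congr_left
        intro z hz
        have : z ≠ y := fun hzy => hn.1 (hzy ▸ hz)
        simp [this]
      simp [mon, sgn, this, pow_succ', mul_assoc]
    · have hx' : x ∈ l := by
        rcases List.mem_cons.1 hx with h | h
        · exact absurd h.symm hy
        · exact h
      have := ih hn.2 hx'
      simp only [mon, List.map_cons, List.prod_cons] at this ⊢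
      rw [← mul_assoc, mul_pow_koszul (hk x y), smul_mul_assoc, mul_assoc, this]
      simp [sgn, hy, smul_smul]

theorem sq_zero_of_koszul {deg : ι → ℤ} {h : ι → R} (hk : Koszul deg h) {x : ι}
    (hx : Odd (deg x)) : h x * h x = 0 := by
  have := hk x x
  rw [Odd.neg_one_zpow (hx.mul hx), neg_one_smul] at this
  have h2 : (2 : ℚ) • (h x * h x) = 0 := by
    rw [two_smul]
    nth_rewrite 1 [this]
    simp
  simpa using h2

theorem mon_zero {deg : ι → ℤ} {h : ι → R} (hk : Koszul deg h) {x : ι}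
    (hx : Odd (deg x)) (l : List ι) (hl : x ∈ l) (e : ι → ℕ) (he : 1 < e x) : mon l h e = 0 := by
  apply List.prod_eq_zero
  rw [List.mem_map]
  refine ⟨x, hl, ?_⟩
  obtain ⟨k, hk'⟩ := Nat.exists_eq_add_of_lt he
  have : e x = 2 + k := by omega
  rw [this, pow_add, pow_two, sq_zero_of_koszul hk hx, zero_mul]

theorem pow_mem_grading {Z : ℤ → Submodule ℚ R} (h1 : (1 : R) ∈ Z 0)
    (hm : ∀ {i j : ℤ} {a b : R}, a ∈ Z i → b ∈ Z j → a * b ∈ Z (i + j)) {a : R} {i : ℤ}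
    (ha : a ∈ Z i) (k : ℕ) : a ^ k ∈ Z (k * i) := by
  induction k with
  | zero => simpa using h1
  | succ k ih =>
    rw [pow_succ]
    have := hm ih ha
    convert this using 2
    push_cast; ring

theorem mon_mem {Z : ℤ → Submodule ℚ R} (h1 : (1 : R) ∈ Z 0)
    (hm : ∀ {i j : ℤ} {a b : R}, a ∈ Z i → b ∈ Z j → a * b ∈ Z (i + j)) {deg : ι → ℤ} {h : ι → R}
    (hh : ∀ x, h x ∈ Z (deg x)) (e : ι → ℕ) (l : List ι) :
    mon l h e ∈ Z ((l.map fun x => (e x : ℤ) * deg x).sum) := by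
  induction l with
  | nil => simpa [mon] using h1
  | cons y l ih =>
    simp only [mon, List.map_cons, List.prod_cons, List.sum_cons] at ih ⊢
    exact hm (pow_mem_grading h1 hm (hh y) (e y)) ih

theorem map_mon {S : Type} [Ring S] [Algebra ℚ S] (f : R →ₐ[ℚ] S) (l : List ι) (h : ι → R)
    (e : ι → ℕ) : f (mon l h e) = mon l (fun x => f (h x)) e := by
  simp only [mon, map_list_prod, List.map_map]
  congr 1
  apply List.map_congr_left
  intro x _
  simp

/-- Admissible exponents. -/
def Adm (deg : ι → ℤ) : Type := {e : ι → ℕ // ∀ x, Odd (deg x) → e x ≤ 1}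

end Mon

/-! ### Free generators -/

/-- Free homogeneous generators of a cdga, with a decomposable differential. -/
structure Gens (A : CDGA) {ι : Type} [Fintype ι] [DecidableEq ι] (l : List ι)
    (deg : ι → ℤ) (g : ι → A.carrier) : Prop where
  nodup : l.Nodup
  full : ∀ x, x ∈ l
  deg_ge : ∀ x, 2 ≤ deg x
  mem : ∀ x, g x ∈ A.grading (deg x)
  li : LinearIndependent ℚ (fun e : Adm deg => mon l g e.1)
  sp : ⊤ ≤ Submodule.span ℚ (Set.range fun e : Adm deg => mon l g e.1)

section Gens

variable {A : CDGA} {ι : Type} [Fintype ι] [DecidableEq ι] {l : List ι}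
    {deg : ι → ℤ} {g : ι → A.carrier}

/-- The total degree of an exponent. -/
def wt (deg : ι → ℤ) (e : ι → ℕ) : ℤ := ∑ x, (e x : ℤ) * deg x

theorem list_sum_eq (hn : l.Nodup) (hf : ∀ x, x ∈ l) (f : ι → ℤ) :
    (l.map f).sum = ∑ x, f x := by
  rw [← List.sum_toFinset f hn]
  congr 1
  ext x
  simp [hf x]

theorem mon_mem' {R : Type} [Ring R] [Algebra ℚ R] {Z : ℤ → Submodule ℚ R} (h1 : (1 : R) ∈ Z 0)
    (hm : ∀ {i j : ℤ} {a b : R}, a ∈ Z i → b ∈ Z j → a * b ∈ Z (i + j)) {h : ι → R}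
    (hh : ∀ x, h x ∈ Z (deg x)) (hn : l.Nodup) (hf : ∀ x, x ∈ l) (e : ι → ℕ) :
    mon l h e ∈ Z (wt deg e) := by
  have := mon_mem h1 hm hh e l
  rwa [list_sum_eq hn hf] at this

theorem Gens.koszul (G : Gens A l deg g) : Koszul deg g := fun x y => A.gcomm (G.mem x) (G.mem y)

theorem Gens.mon_mem (G : Gens A l deg g) (e : ι → ℕ) : mon l g e ∈ A.grading (wt deg e) :=
  mon_mem' A.one_mem A.mul_mem G.mem G.nodup G.full e

theorem Gens.grading_le (G : Gens A l deg g) (n : ℤ) :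
    A.grading n ≤ Submodule.span ℚ ((fun e : Adm deg => mon l g e.1) '' {e | wt deg e.1 = n}) :=
  mem_iff_of_le_span A.internal _ (fun e : Adm deg => wt deg e.1) (fun e => G.mon_mem e.1) G.sp n

theorem Gens.adjoin (G : Gens A l deg g) : Algebra.adjoin ℚ (Set.range g) = ⊤ := by
  rw [eq_top_iff]
  intro a _
  have : a ∈ Submodule.span ℚ (Set.range fun e : Adm deg => mon l g e.1) := G.sp trivial
  have hle : Submodule.span ℚ (Set.range fun e : Adm deg => mon l g e.1) ≤
      Subalgebra.toSubmodule (Algebra.adjoin ℚ (Set.range g)) := by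
    rw [Submodule.span_le]
    rintro _ ⟨e, rfl⟩
    refine Subalgebra.list_prod_mem _ ?_
    intro z hz
    obtain ⟨x, _, rfl⟩ := List.mem_map.1 hz
    have hg : g x ∈ Algebra.adjoin ℚ (Set.range g) := Algebra.subset_adjoin ⟨x, rfl⟩
    exact Subalgebra.pow_mem _ hg _
  exact hle this

/-- The universal property. -/
theorem Gens.exists_hom (G : Gens A l deg g) {R : Type} [Ring R] [Algebra ℚ R] (h : ι → R)
    (hk : Koszul deg h) : ∃ Ψ : A.carrier →ₐ[ℚ] R, ∀ x, Ψ (g x) = h x := by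
  let b : Module.Basis (Adm deg) ℚ A.carrier := Module.Basis.mk G.li G.sp
  let Ψ : A.carrier →ₗ[ℚ] R := b.constr ℚ (fun e => mon l h e.1)
  have hΨ : ∀ e : ι → ℕ, Ψ (mon l g e) = mon l h e := by
    intro e
    by_cases he : ∀ x, Odd (deg x) → e x ≤ 1
    · have h1 : b (⟨e, he⟩ : Adm deg) = mon l g e := by simp [b]
      rw [← h1]
      exact Module.Basis.constr_basis b ℚ (fun e : Adm deg => mon l h e.1) ⟨e, he⟩
    · push Not at he
      obtain ⟨x, hx, hx2⟩ := he
      rw [mon_zero G.koszul hx l (G.full x) e hx2, mon_zero hk hx l (G.full x) e hx2, map_zero]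
  have h1 : Ψ 1 = 1 := by
    have := hΨ 0
    simpa [mon] using this
  have hmulg : ∀ x a, Ψ (g x * a) = h x * Ψ a := by
    intro x a
    have ha : a ∈ Submodule.span ℚ (Set.range fun e : Adm deg => mon l g e.1) := G.sp trivial
    induction ha using Submodule.span_induction with
    | mem y hy =>
      obtain ⟨e, rfl⟩ := hy
      simp only
      rw [mul_mon G.koszul x e.1 l G.nodup (G.full x), map_smul, hΨ, hΨ,
        mul_mon hk x e.1 l G.nodup (G.full x)]
    | zero => simp
    | add y z _ _ hy hz => rw [mul_add, map_add, hy, hz, map_add, mul_add]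
    | smul c y _ hy => rw [mul_smul_comm, map_smul, hy, map_smul, mul_smul_comm]
  have hmul : ∀ a b, Ψ (a * b) = Ψ a * Ψ b := by
    intro a
    have ha : a ∈ Algebra.adjoin ℚ (Set.range g) := by rw [G.adjoin]; trivial
    induction ha using Algebra.adjoin_induction with
    | mem y hy =>
      obtain ⟨x, rfl⟩ := hy
      intro b
      rw [hmulg]
      congr 1
      have := hmulg x 1
      rw [mul_one, h1, mul_one] at this
      exact this.symm
    | algebraMap r =>
      intro b
      rw [Algebra.algebraMap_eq_smul_one, smul_mul_assoc, one_mul, map_smul, map_smul, h1,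
        smul_mul_assoc, one_mul]
    | add y z _ _ hy hz => intro b; rw [add_mul, map_add, hy, hz, map_add, add_mul]
    | mul y z _ _ hy hz => intro b; rw [mul_assoc, hy, hz, hy, mul_assoc]
  refine ⟨AlgHom.ofLinearMap Ψ h1 hmul, fun x => ?_⟩
  have := hmulg x 1
  rw [mul_one, h1, mul_one] at this
  exact this

theorem Gens.hom_ext (G : Gens A l deg g) {R : Type} [Ring R] [Algebra ℚ R]
    {Ψ Φ : A.carrier →ₐ[ℚ] R} (h : ∀ x, Ψ (g x) = Φ (g x)) : Ψ = Φ := by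
  apply AlgHom.ext_of_adjoin_eq_top G.adjoin
  rintro _ ⟨x, rfl⟩
  exact h x

theorem Gens.hom_mem (G : Gens A l deg g) {R : Type} [Ring R] [Algebra ℚ R]
    {Z : ℤ → Submodule ℚ R} (h1 : (1 : R) ∈ Z 0)
    (hm : ∀ {i j : ℤ} {a b : R}, a ∈ Z i → b ∈ Z j → a * b ∈ Z (i + j))
    {Ψ : A.carrier →ₐ[ℚ] R} (h : ∀ x, Ψ (g x) ∈ Z (deg x)) (n : ℤ) :
    ∀ a ∈ A.grading n, Ψ a ∈ Z n := by
  intro a ha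
  have := G.grading_le n ha
  have hle : Submodule.span ℚ ((fun e : Adm deg => mon l g e.1) '' {e | wt deg e.1 = n}) ≤
      (Z n).comap Ψ.toLinearMap := by
    rw [Submodule.span_le]
    rintro _ ⟨e, he, rfl⟩
    have := mon_mem' h1 hm h G.nodup G.full e.1
    simp only [Set.mem_setOf_eq] at he
    rw [he] at this
    simp only [Submodule.comap_coe, Set.mem_preimage, AlgHom.toLinearMap_apply, SetLike.mem_coe]
    rw [map_mon]
    exact this
  exact hle this

theorem wt_nonneg (hd : ∀ x, 2 ≤ deg x) (e : ι → ℕ) : 0 ≤ wt deg e := by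
  apply Finset.sum_nonneg
  intro x _
  have := hd x
  positivity

theorem le_wt (hd : ∀ x, 2 ≤ deg x) (e : ι → ℕ) (x : ι) (hx : e x ≠ 0) : deg x ≤ wt deg e := by
  have h1 : (e x : ℤ) * deg x ≤ wt deg e := by
    apply Finset.single_le_sum (f := fun x => (e x : ℤ) * deg x) _ (Finset.mem_univ x)
    intro y _
    have := hd y
    positivity
  have h2 : (1 : ℤ) ≤ e x := by exact_mod_cast Nat.one_le_iff_ne_zero.2 hx
  have := hd x
  nlinarith

/-- The grading piece of degree `n` lies in the subalgebra generated by generators of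
degree at most `n`. -/
theorem Gens.mem_adjoin (G : Gens A l deg g) {n : ℤ} {a : A.carrier} (ha : a ∈ A.grading n) :
    a ∈ Algebra.adjoin ℚ (g '' {x | deg x ≤ n}) := by
  have := G.grading_le n ha
  have hle : Submodule.span ℚ ((fun e : Adm deg => mon l g e.1) '' {e | wt deg e.1 = n}) ≤
      Subalgebra.toSubmodule (Algebra.adjoin ℚ (g '' {x | deg x ≤ n})) := by
    rw [Submodule.span_le]
    rintro _ ⟨e, he, rfl⟩
    refine Subalgebra.list_prod_mem _ ?_
    intro z hz
    obtain ⟨x, _, rfl⟩ := List.mem_map.1 hz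
    by_cases hx : e.1 x = 0
    · simp only [hx, pow_zero]; exact Subalgebra.one_mem _
    · have h1 := le_wt G.deg_ge e.1 x hx
      have h2 : wt deg e.1 = n := he
      have h3 : deg x ≤ n := by omega
      have hg : g x ∈ Algebra.adjoin ℚ (g '' {x | deg x ≤ n}) :=
        Algebra.subset_adjoin ⟨x, h3, rfl⟩
      exact Subalgebra.pow_mem _ hg _
  exact hle this

theorem wt_eq_zero (hd : ∀ x, 2 ≤ deg x) (e : ι → ℕ) (h : wt deg e < 2) : e = 0 := by
  funext x
  by_contra hx
  have := le_wt hd e x hx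
  have := hd x
  omega

theorem Gens.grading_one (G : Gens A l deg g) : A.grading 1 = ⊥ := by
  rw [eq_bot_iff]
  refine (G.grading_le 1).trans ?_
  rw [Submodule.span_le]
  rintro _ ⟨e, he, rfl⟩
  have he' : wt deg e.1 = 1 := he
  have := wt_eq_zero G.deg_ge e.1 (by omega)
  rw [this] at he'
  simp [wt] at he'

theorem Adm.finite_wt (hd : ∀ x, 2 ≤ deg x) (n : ℤ) : {e : ι → ℕ | wt deg e = n}.Finite := by
  apply Set.Finite.subset (Set.finite_Iic (fun _ => n.toNat))
  intro e he x
  have he' : wt deg e = n := he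
  have h1 : (e x : ℤ) * deg x ≤ wt deg e := by
    apply Finset.single_le_sum (f := fun x => (e x : ℤ) * deg x) _ (Finset.mem_univ x)
    intro y _
    have := hd y
    positivity
  have := hd x
  have h3 : (0 : ℤ) ≤ e x := by positivity
  have : (e x : ℤ) ≤ n := by nlinarith
  show e x ≤ n.toNat
  omega

theorem Gens.findim (G : Gens A l deg g) (n : ℤ) : FiniteDimensional ℚ (A.grading n) := by
  have hfin : {e : Adm deg | wt deg e.1 = n}.Finite :=
    (Adm.finite_wt G.deg_ge n).preimage Subtype.val_injective.injOn
  have : FiniteDimensional ℚ (Submodule.span ℚ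
      ((fun e : Adm deg => mon l g e.1) '' {e | wt deg e.1 = n})) :=
    FiniteDimensional.span_of_finite ℚ (hfin.image _)
  exact Submodule.finiteDimensional_of_le (G.grading_le n)

/-- Products of two elements of positive degree, in degree `n`. -/
def dec (A : CDGA) (n : ℤ) : Submodule ℚ A.carrier :=
  Submodule.span ℚ {z | ∃ i j : ℤ, 0 < i ∧ 0 < j ∧ i + j = n ∧
    ∃ x ∈ A.grading i, ∃ y ∈ A.grading j, z = x * y}

theorem mem_dec {n : ℤ} {a : A.carrier} (ha : a ∈ A.grading n) (hd : a ∈ A.decomposables) :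
    a ∈ dec A n := by
  have : proj A.internal n a ∈ dec A n := by
    clear ha
    induction hd using Submodule.span_induction with
    | mem y hy =>
      obtain ⟨u, ⟨i, hi, hu⟩, v, ⟨j, hj, hv⟩, rfl⟩ := hy
      by_cases h : i + j = n
      · rw [proj_same A.internal (h ▸ A.mul_mem hu hv)]
        exact Submodule.subset_span ⟨i, j, hi, hj, h, u, hu, v, hv, rfl⟩
      · rw [proj_ne A.internal (A.mul_mem hu hv) h]; exact Submodule.zero_mem _
    | zero => simp
    | add y z _ _ hy hz => rw [map_add]; exact Submodule.add_mem _ hy hz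
    | smul c y _ hy => rw [map_smul]; exact Submodule.smul_mem _ _ hy
  rwa [proj_same A.internal ha] at this

/-- A positive degree piece is spanned by generators and products. -/
theorem Gens.grading_le_dec (G : Gens A l deg g) {n : ℤ} (hn : 0 < n) :
    A.grading n ≤ dec A n ⊔ Submodule.span ℚ (g '' {x | deg x = n}) := by
  have key : ∀ (l : List ι) (e : ι → ℕ), mon l g e ∈ A.grading ((l.map fun x => (e x : ℤ) * deg x).sum) ∧
      (0 < (l.map fun x => (e x : ℤ) * deg x).sum →
      mon l g e ∈ dec A ((l.map fun x => (e x : ℤ) * deg x).sum) ⊔ Submodule.span ℚ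
        (g '' {x | deg x = ((l.map fun x => (e x : ℤ) * deg x).sum)})) := by
    intro l e
    refine ⟨TRC.mon_mem A.one_mem A.mul_mem G.mem e l, ?_⟩
    induction l with
    | nil => simp
    | cons y l ih =>
      have hl := TRC.mon_mem A.one_mem A.mul_mem G.mem e l
      set s := (l.map fun x => (e x : ℤ) * deg x).sum with hs
      have hs0 : 0 ≤ s := by
        apply List.sum_nonneg
        intro z hz
        obtain ⟨x, _, rfl⟩ := List.mem_map.1 hz
        have := G.deg_ge x
        positivity
      have hm : mon (y :: l) g e = g y ^ e y * mon l g e := by simp [mon]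
      have hsum : ((y :: l).map fun x => (e x : ℤ) * deg x).sum = (e y : ℤ) * deg y + s := by
        simp [hs]
      rw [hm, hsum]
      intro hpos
      have hdy := G.deg_ge y
      rcases Nat.eq_zero_or_pos (e y) with h0 | h0
      · simp only [h0, pow_zero, one_mul, Nat.cast_zero, zero_mul, zero_add] at hpos ⊢
        exact ih hpos
      · have h0' : (1 : ℤ) ≤ e y := by exact_mod_cast h0
        have hyp := pow_mem_grading (Z := A.grading) A.one_mem A.mul_mem (G.mem y) (e y)
        rcases hs0.eq_or_lt with h1 | h1
        · -- the rest has degree zero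
          have he : ∀ x ∈ l, e x = 0 := by
            intro x hx
            by_contra hne
            have h2 : (e x : ℤ) * deg x ≤ s := by
              apply List.single_le_sum
              · intro z hz
                obtain ⟨x, _, rfl⟩ := List.mem_map.1 hz
                have := G.deg_ge x
                positivity
              · exact List.mem_map.2 ⟨x, hx, rfl⟩
            have h3 : (1 : ℤ) ≤ e x := by exact_mod_cast Nat.one_le_iff_ne_zero.2 hne
            have := G.deg_ge x
            nlinarith
          have hone : mon l g e = 1 := by
            apply List.prod_eq_one
            intro z hz
            obtain ⟨x, hx, rfl⟩ := List.mem_map.1 hz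
            simp [he x hx]
          rw [hone, mul_one, ← h1, add_zero]
          rcases Nat.lt_or_ge 1 (e y) with h2 | h2
          · apply Submodule.mem_sup_left
            obtain ⟨k, hk⟩ := Nat.exists_eq_add_of_lt h2
            have hk' : e y = (k + 1) + 1 := by omega
            rw [hk', pow_succ]
            refine Submodule.subset_span ⟨((k + 1 : ℕ) : ℤ) * deg y, deg y, ?_, by omega, ?_, _,
              pow_mem_grading (Z := A.grading) A.one_mem A.mul_mem (G.mem y) (k + 1), _, G.mem y, rfl⟩
            · positivity
            · push_cast; ring
          · apply Submodule.mem_sup_right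
            have : e y = 1 := by omega
            rw [this, pow_one]
            exact Submodule.subset_span ⟨y, by simp, rfl⟩
        · apply Submodule.mem_sup_left
          exact Submodule.subset_span ⟨_, _, by positivity, h1, rfl, _, hyp, _, hl, rfl⟩
  refine (G.grading_le n).trans ?_
  rw [Submodule.span_le]
  rintro _ ⟨e, he, rfl⟩
  have := (key l e.1).2
  rw [list_sum_eq G.nodup G.full] at this
  have he' : wt deg e.1 = n := he
  simp only [wt] at he'
  rw [he'] at this
  exact this hn

end Gens

end TRC

set_option linter.unusedSectionVars false
set_option linter.deprecated false

namespace TRC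

/-! ### The lifting lemma -/

/-- A graded-commutative differential algebra where the laws are only required on
homogeneous elements (and the graded pieces need not span). -/
structure PreC {R : Type} [Ring R] [Algebra ℚ R] (Z : ℤ → Submodule ℚ R) (dZ : R →ₗ[ℚ] R) :
    Prop where
  one_mem : (1 : R) ∈ Z 0
  mul_mem : ∀ {i j : ℤ} {a b : R}, a ∈ Z i → b ∈ Z j → a * b ∈ Z (i + j)
  gcomm : ∀ {i j : ℤ} {a b : R}, a ∈ Z i → b ∈ Z j → a * b = ((-1 : ℚ) ^ (i * j)) • (b * a)
  d_mem : ∀ {i : ℤ} {a : R}, a ∈ Z i → dZ a ∈ Z (i + 1)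
  d_sq : ∀ {i : ℤ} {a : R}, a ∈ Z i → dZ (dZ a) = 0
  leibniz : ∀ {i j : ℤ} {a b : R}, a ∈ Z i → b ∈ Z j →
      dZ (a * b) = dZ a * b + ((-1 : ℚ) ^ i) • (a * dZ b)

theorem CDGA_preC (A : CDGA) : PreC A.grading A.d where
  one_mem := A.one_mem
  mul_mem := A.mul_mem
  gcomm := A.gcomm
  d_mem := A.d_mem
  d_sq := fun _ => A.d_sq _
  leibniz := fun ha _ => A.leibniz ha _

theorem PreC.d_one {R : Type} [Ring R] [Algebra ℚ R] {Z : ℤ → Submodule ℚ R} {dZ : R →ₗ[ℚ] R}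
    (P : PreC Z dZ) : dZ 1 = 0 := by
  have := P.leibniz P.one_mem P.one_mem
  simpa using this

section

variable {A : CDGA} {ι : Type} [Fintype ι] [DecidableEq ι] {l : List ι}
    {deg : ι → ℤ} {g : ι → A.carrier}

theorem Gens.dec_le (G : Gens A l deg g) (n : ℤ) : dec A n ≤
    Submodule.span ℚ {z | ∃ i j : ℤ, 2 ≤ i ∧ 2 ≤ j ∧ i + j = n ∧
    ∃ x ∈ A.grading i, ∃ y ∈ A.grading j, z = x * y} := by
  unfold dec
  rw [Submodule.span_le]
  rintro z ⟨i, j, hi, hj, hij, x, hx, y, hy, rfl⟩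
  by_cases h1 : i = 1
  · subst h1
    rw [G.grading_one, Submodule.mem_bot] at hx
    simp [hx]
  by_cases h2 : j = 1
  · subst h2
    rw [G.grading_one, Submodule.mem_bot] at hy
    simp [hy]
  exact Submodule.subset_span ⟨i, j, by omega, by omega, hij, x, hx, y, hy, rfl⟩

variable {R : Type} [Ring R] [Algebra ℚ R] {Z : ℤ → Submodule ℚ R} {dZ : R →ₗ[ℚ] R}

theorem Gens.comm_of_gens (G : Gens A l deg g) (P : PreC Z dZ) {Ψ : A.carrier →ₐ[ℚ] R}
    (hΨ : ∀ x, Ψ (g x) ∈ Z (deg x)) (n : ℤ)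
    (hc : ∀ x, deg x ≤ n → dZ (Ψ (g x)) = Ψ (A.d (g x))) :
    ∀ a ∈ A.grading n, dZ (Ψ a) = Ψ (A.d a) := by
  have hmem := G.hom_mem P.one_mem P.mul_mem hΨ
  have hmul : ∀ (i j : ℤ) (a b : A.carrier), a ∈ A.grading i → b ∈ A.grading j →
      dZ (Ψ a) = Ψ (A.d a) → dZ (Ψ b) = Ψ (A.d b) → dZ (Ψ (a * b)) = Ψ (A.d (a * b)) := by
    intro i j a b ha hb h1 h2
    rw [map_mul, P.leibniz (hmem _ _ ha) (hmem _ _ hb), A.leibniz ha, map_add, map_smul, map_mul,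
      map_mul, h1, h2]
  have hone : dZ (Ψ 1) = Ψ (A.d 1) := by
    rw [map_one, P.d_one, (CDGA_preC A).d_one, map_zero]
  have hpow : ∀ (i : ℤ) (a : A.carrier) (k : ℕ), a ∈ A.grading i → dZ (Ψ a) = Ψ (A.d a) →
      dZ (Ψ (a ^ k)) = Ψ (A.d (a ^ k)) := by
    intro i a k ha h1
    induction k with
    | zero => simpa using hone
    | succ k ih =>
      rw [pow_succ]
      exact hmul _ _ _ _ (pow_mem_grading A.one_mem A.mul_mem ha k) ha ih h1
  have hmon : ∀ (l : List ι) (e : ι → ℕ), (∀ x, e x ≠ 0 → deg x ≤ n) →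
      dZ (Ψ (mon l g e)) = Ψ (A.d (mon l g e)) := by
    intro l e he
    induction l with
    | nil => simpa [mon] using hone
    | cons y l ih =>
      have hm : mon (y :: l) g e = g y ^ e y * mon l g e := by simp [mon]
      rw [hm]
      refine hmul _ _ _ _ (pow_mem_grading A.one_mem A.mul_mem (G.mem y) (e y))
        (TRC.mon_mem A.one_mem A.mul_mem G.mem e l) ?_ ih
      by_cases h0 : e y = 0
      · simpa [h0] using hone
      · exact hpow _ _ _ (G.mem y) (hc y (he y h0))
  intro a ha
  have ha' := G.grading_le n ha
  clear ha
  induction ha' using Submodule.span_induction with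
  | mem y hy =>
    obtain ⟨e, he, rfl⟩ := hy
    apply hmon
    intro x hx
    have h1 := le_wt G.deg_ge e.1 x hx
    have h2 : wt deg e.1 = n := he
    omega
  | zero => simp
  | add y z _ _ hy hz => simp [hy, hz]
  | smul c y _ hy => simp [hy]

theorem Gens.lift (G : Gens A l deg g) (hdec : ∀ x, A.d (g x) ∈ A.decomposables)
    (P : PreC Z dZ) {Y : CDGA} (f : R →ₐ[ℚ] Y.carrier)
    (hfd : ∀ n, ∀ z ∈ Z n, f (dZ z) = Y.d (f z))
    (hsurj : ∀ n, ∀ y ∈ Y.grading n, ∃ z ∈ Z n, f z = y)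
    (hker : ∀ n, ∀ z ∈ Z (n + 1), dZ z = 0 → f z = 0 → ∃ z' ∈ Z n, dZ z' = z ∧ f z' = 0)
    (φ : CDGAHom A Y) :
    ∃ Ψ : A.carrier →ₐ[ℚ] R, (∀ n, ∀ a ∈ A.grading n, Ψ a ∈ Z n) ∧
      (∀ a, dZ (Ψ a) = Ψ (A.d a)) ∧ ∀ a, f (Ψ a) = φ.toFun a := by
  have hd : ∀ x, A.d (g x) ∈ Submodule.span ℚ {z | ∃ i j : ℤ, 2 ≤ i ∧ 2 ≤ j ∧ i + j = deg x + 1 ∧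
    ∃ x ∈ A.grading i, ∃ y ∈ A.grading j, z = x * y} := fun x =>
      G.dec_le _ (mem_dec (A.d_mem (G.mem x)) (hdec x))
  have step : ∀ k : ℕ, ∃ Ψ : A.carrier →ₐ[ℚ] R, (∀ x, Ψ (g x) ∈ Z (deg x)) ∧
      (∀ x, f (Ψ (g x)) = φ.toFun (g x)) ∧
      ∀ x, deg x < k → dZ (Ψ (g x)) = Ψ (A.d (g x)) := by
    intro k
    induction k with
    | zero =>
      have : ∀ x, ∃ z ∈ Z (deg x), f z = φ.toFun (g x) := fun x =>
        hsurj _ _ (φ.map_grading _ _ (G.mem x))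
      choose h hZ hf using this
      obtain ⟨Ψ, hΨ⟩ := G.exists_hom h (fun x y => P.gcomm (hZ x) (hZ y))
      refine ⟨Ψ, fun x => by rw [hΨ]; exact hZ x, fun x => by rw [hΨ]; exact hf x, ?_⟩
      intro x hx
      have := G.deg_ge x
      simp at hx
      omega
    | succ k ih =>
      obtain ⟨Ψ, h1, h2, h3⟩ := ih
      have hmem := G.hom_mem P.one_mem P.mul_mem h1
      have hfΨ : ∀ a, f (Ψ a) = φ.toFun a := by
        intro a
        have : f.comp Ψ = φ.toFun := G.hom_ext h2
        exact DFunLike.congr_fun this a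
      have hcl : ∀ i : ℤ, i < k → ∀ a ∈ A.grading i, dZ (Ψ a) = Ψ (A.d a) := by
        intro i hi
        apply G.comm_of_gens P h1
        intro x hx
        exact h3 x (by omega)
      have hcd : ∀ x, deg x = k → dZ (Ψ (A.d (g x))) = 0 := by
        intro x hx
        have := hd x
        have h4 : dZ (Ψ (A.d (g x))) = Ψ (A.d (A.d (g x))) := by
          generalize A.d (g x) = w at this ⊢
          induction this using Submodule.span_induction with
          | mem y hy =>
            obtain ⟨i, j, hi, hj, hij, u, hu, v, hv, rfl⟩ := hy
            rw [map_mul, P.leibniz (hmem _ _ hu) (hmem _ _ hv), A.leibniz hu, map_add, map_smul,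
              map_mul, map_mul, hcl i (by omega) _ hu, hcl j (by omega) _ hv]
          | zero => simp
          | add y z _ _ hy hz => simp [hy, hz]
          | smul c y _ hy => simp [hy]
        rw [h4, A.d_sq, map_zero]
      have hch : ∀ x, ∃ z ∈ Z (deg x), f z = φ.toFun (g x) ∧
          (deg x = k → dZ z = Ψ (A.d (g x))) ∧ (deg x ≠ k → z = Ψ (g x)) := by
        intro x
        by_cases hx : deg x = k
        · have hz : Ψ (A.d (g x)) - dZ (Ψ (g x)) ∈ Z (deg x + 1) :=
            Submodule.sub_mem _ (hmem _ _ (A.d_mem (G.mem x))) (P.d_mem (h1 x))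
          obtain ⟨z', hz', hz1, hz2⟩ := hker _ _ hz
            (by rw [map_sub, hcd x hx, P.d_sq (h1 x), sub_zero])
            (by rw [map_sub, hfΨ, hfd _ _ (h1 x), hfΨ, φ.comm_d, sub_self])
          refine ⟨Ψ (g x) + z', Submodule.add_mem _ (h1 x) hz', ?_, ?_, ?_⟩
          · rw [map_add, hz2, add_zero, h2]
          · intro _
            rw [map_add, hz1]; abel
          · intro h; exact absurd hx h
        · exact ⟨Ψ (g x), h1 x, h2 x, fun h => absurd h hx, fun _ => rfl⟩
      choose h hZ hf hk1 hk2 using hch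
      obtain ⟨Ψ', hΨ'⟩ := G.exists_hom h (fun x y => P.gcomm (hZ x) (hZ y))
      have heq : ∀ i : ℤ, i < k → ∀ a ∈ A.grading i, Ψ' a = Ψ a := by
        intro i hi a ha
        have := G.mem_adjoin ha
        have hle : Algebra.adjoin ℚ (g '' {x | deg x ≤ i}) ≤ AlgHom.equalizer Ψ' Ψ := by
          rw [Algebra.adjoin_le_iff]
          rintro _ ⟨x, hx, rfl⟩
          have hx' : deg x ≤ i := hx
          show Ψ' (g x) = Ψ (g x)
          rw [hΨ', hk2 x (by omega)]
        exact hle this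
      have heqd : ∀ x, deg x ≤ k → Ψ' (A.d (g x)) = Ψ (A.d (g x)) := by
        intro x hx
        have := hd x
        generalize A.d (g x) = w at this ⊢
        induction this using Submodule.span_induction with
        | mem y hy =>
          obtain ⟨i, j, hi, hj, hij, u, hu, v, hv, rfl⟩ := hy
          rw [map_mul, map_mul, heq i (by omega) _ hu, heq j (by omega) _ hv]
        | zero => simp
        | add y z _ _ hy hz => simp [hy, hz]
        | smul c y _ hy => simp [hy]
      refine ⟨Ψ', fun x => by rw [hΨ']; exact hZ x, fun x => by rw [hΨ']; exact hf x, ?_⟩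
      intro x hx
      push_cast at hx
      rw [heqd x (by omega), hΨ']
      by_cases hxk : deg x = k
      · exact hk1 x hxk
      · rw [hk2 x hxk]; exact h3 x (by omega)
  obtain ⟨N, hN⟩ : ∃ N : ℕ, ∀ x, deg x < N := by
    refine ⟨∑ x, (deg x).toNat + 1, fun x => ?_⟩
    have h1 : (deg x).toNat ≤ ∑ x, (deg x).toNat :=
      Finset.single_le_sum (f := fun x => (deg x).toNat) (fun _ _ => Nat.zero_le _)
        (Finset.mem_univ x)
    have := G.deg_ge x
    omega
  obtain ⟨Ψ, h1, h2, h3⟩ := step N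
  refine ⟨Ψ, G.hom_mem P.one_mem P.mul_mem h1, ?_, ?_⟩
  · intro a
    refine linear_ext A.internal (f := dZ ∘ₗ Ψ.toLinearMap) (g := Ψ.toLinearMap ∘ₗ A.d) ?_ a
    intro n y hy
    exact G.comm_of_gens P h1 n (fun x _ => h3 x (hN x)) y hy
  · intro a
    have : f.comp Ψ = φ.toFun := G.hom_ext h2
    exact DFunLike.congr_fun this a

end

end TRC

set_option linter.unusedSectionVars false
set_option linter.deprecated false

namespace TRC

open Polynomial

/-! ### Polynomial forms and the path object -/

section Poly

variable {Y : CDGA}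

/-- Coefficientwise differential. -/
noncomputable def pD (Y : CDGA) : Y.carrier[X] →ₗ[ℚ] Y.carrier[X] :=
  Polynomial.lsum (fun i => ((Polynomial.monomial i).restrictScalars ℚ) ∘ₗ Y.d)

/-- Formal integration from zero. -/
noncomputable def pI (Y : CDGA) : Y.carrier[X] →ₗ[ℚ] Y.carrier[X] :=
  Polynomial.lsum (fun i => (1 / ((i : ℚ) + 1)) •
    ((Polynomial.monomial (i + 1) : Y.carrier →ₗ[Y.carrier] Y.carrier[X]).restrictScalars ℚ))

theorem pD_monomial (i : ℕ) (a : Y.carrier) : pD Y (monomial i a) = monomial i (Y.d a) := by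
  simp [pD, Polynomial.lsum_apply, Polynomial.sum_monomial_index]

theorem pI_monomial (i : ℕ) (a : Y.carrier) :
    pI Y (monomial i a) = (1 / ((i : ℚ) + 1)) • monomial (i + 1) a := by
  simp [pI, Polynomial.lsum_apply, Polynomial.sum_monomial_index]

theorem poly_ext {N : Type} [AddCommGroup N] [Module ℚ N] {f h : Y.carrier[X] →ₗ[ℚ] N}
    (hfh : ∀ i a, f (monomial i a) = h (monomial i a)) (p : Y.carrier[X]) : f p = h p := by
  induction p using Polynomial.induction_on' with
  | add p q hp hq => simp [hp, hq]
  | monomial i a => exact hfh i a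

theorem coeff_pD (p : Y.carrier[X]) (k : ℕ) : (pD Y p).coeff k = Y.d (p.coeff k) := by
  induction p using Polynomial.induction_on' with
  | add p q hp hq => simp [hp, hq]
  | monomial i a =>
    rw [pD_monomial, coeff_monomial, coeff_monomial]
    split_ifs <;> simp

theorem coeff_pI_zero (p : Y.carrier[X]) : (pI Y p).coeff 0 = 0 := by
  induction p using Polynomial.induction_on' with
  | add p q hp hq => simp [hp, hq]
  | monomial i a => simp [pI_monomial, coeff_monomial]

theorem coeff_pI_succ (p : Y.carrier[X]) (k : ℕ) :
    (pI Y p).coeff (k + 1) = (1 / ((k : ℚ) + 1)) • p.coeff k := by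
  induction p using Polynomial.induction_on' with
  | add p q hp hq => simp [hp, hq]
  | monomial i a =>
    rw [pI_monomial, coeff_smul, coeff_monomial, coeff_monomial]
    by_cases h : i = k
    · simp [h]
    · simp [h]

theorem coeff_deriv (p : Y.carrier[X]) (k : ℕ) :
    (derivative p).coeff k = ((k : ℚ) + 1) • p.coeff (k + 1) := by
  rw [coeff_derivative, Algebra.smul_def]
  have : (algebraMap ℚ Y.carrier) ((k : ℚ) + 1) = (k : Y.carrier) + 1 := by simp
  rw [← this, Algebra.commutes]

theorem deriv_pI (p : Y.carrier[X]) : derivative (pI Y p) = p := by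
  ext k
  rw [coeff_deriv, coeff_pI_succ, smul_smul]
  have : ((k : ℚ) + 1) ≠ 0 := by positivity
  field_simp
  simp

theorem pI_deriv (p : Y.carrier[X]) : pI Y (derivative p) = p - C (p.coeff 0) := by
  ext k
  cases k with
  | zero => simp [coeff_pI_zero]
  | succ k =>
    rw [coeff_pI_succ, coeff_deriv, smul_smul]
    have : ((k : ℚ) + 1) ≠ 0 := by positivity
    simp [coeff_C, this]

theorem pD_pI (p : Y.carrier[X]) : pD Y (pI Y p) = pI Y (pD Y p) := by
  ext k
  cases k with
  | zero => simp [coeff_pI_zero, coeff_pD]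
  | succ k => simp [coeff_pI_succ, coeff_pD]

theorem pD_deriv (p : Y.carrier[X]) : pD Y (derivative p) = derivative (pD Y p) := by
  ext k
  simp only [coeff_pD, coeff_deriv, map_smul]

theorem pD_C (a : Y.carrier) : pD Y (C a) = C (Y.d a) := by
  simpa using pD_monomial (Y := Y) 0 a

theorem pD_pD (p : Y.carrier[X]) : pD Y (pD Y p) = 0 := by
  ext k
  simp [coeff_pD, Y.d_sq]

/-- Evaluation at `1`. -/
noncomputable def ev1 (Y : CDGA) : Y.carrier[X] →ₐ[ℚ] Y.carrier :=
  { Polynomial.eval₂RingHom' (RingHom.id Y.carrier) 1 (fun _ => Commute.one_right _) with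
    commutes' := by
      intro r
      change eval₂ (RingHom.id Y.carrier) 1 (C (algebraMap ℚ Y.carrier r)) = _
      rw [eval₂_C]
      rfl }

theorem ev1_monomial (i : ℕ) (a : Y.carrier) : ev1 Y (monomial i a) = a := by
  simp [ev1, eval₂RingHom']

theorem ev1_C (a : Y.carrier) : ev1 Y (C a) = a := by
  simpa using ev1_monomial (Y := Y) 0 a

theorem ev1_pD (p : Y.carrier[X]) : ev1 Y (pD Y p) = Y.d (ev1 Y p) := by
  induction p using Polynomial.induction_on' with
  | add p q hp hq => simp [hp, hq]
  | monomial i a => rw [pD_monomial, ev1_monomial, ev1_monomial]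

/-- Coefficientwise grading. -/
def pG (Y : CDGA) (n : ℤ) : Submodule ℚ Y.carrier[X] where
  carrier := {p | ∀ k, p.coeff k ∈ Y.grading n}
  zero_mem' := by intro k; simp
  add_mem' := by
    intro p q hp hq k
    rw [coeff_add]
    exact Submodule.add_mem _ (hp k) (hq k)
  smul_mem' := by
    intro c p hp k
    rw [coeff_smul]
    exact Submodule.smul_mem _ _ (hp k)

theorem pG_mul {i j : ℤ} {p q : Y.carrier[X]} (hp : p ∈ pG Y i) (hq : q ∈ pG Y j) :
    p * q ∈ pG Y (i + j) := by
  intro k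
  rw [coeff_mul]
  exact Submodule.sum_mem _ (fun x _ => Y.mul_mem (hp _) (hq _))

theorem pG_comm {i j : ℤ} {p q : Y.carrier[X]} (hp : p ∈ pG Y i) (hq : q ∈ pG Y j) :
    p * q = ((-1 : ℚ) ^ (i * j)) • (q * p) := by
  ext k
  rw [coeff_smul, coeff_mul, coeff_mul, Finset.smul_sum, ← Finset.Nat.sum_antidiagonal_swap]
  apply Finset.sum_congr rfl
  intro x _
  exact Y.gcomm (hp _) (hq _)

theorem pG_leibniz {i : ℤ} {p : Y.carrier[X]} (hp : p ∈ pG Y i) (q : Y.carrier[X]) :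
    pD Y (p * q) = pD Y p * q + ((-1 : ℚ) ^ i) • (p * pD Y q) := by
  ext k
  rw [coeff_pD, coeff_mul, map_sum, coeff_add, coeff_smul, coeff_mul, coeff_mul, Finset.smul_sum,
    ← Finset.sum_add_distrib]
  apply Finset.sum_congr rfl
  intro x _
  rw [Y.leibniz (hp _), coeff_pD, coeff_pD]

theorem pG_D {i : ℤ} {p : Y.carrier[X]} (hp : p ∈ pG Y i) : pD Y p ∈ pG Y (i + 1) := by
  intro k
  rw [coeff_pD]
  exact Y.d_mem (hp k)

theorem pG_deriv {i : ℤ} {p : Y.carrier[X]} (hp : p ∈ pG Y i) : derivative p ∈ pG Y i := by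
  intro k
  rw [coeff_deriv]
  exact Submodule.smul_mem _ _ (hp _)

theorem pG_I {i : ℤ} {p : Y.carrier[X]} (hp : p ∈ pG Y i) : pI Y p ∈ pG Y i := by
  intro k
  cases k with
  | zero => rw [coeff_pI_zero]; exact Submodule.zero_mem _
  | succ k =>
    rw [coeff_pI_succ]
    exact Submodule.smul_mem _ _ (hp _)

theorem pG_monomial {i : ℤ} {a : Y.carrier} (ha : a ∈ Y.grading i) (k : ℕ) :
    monomial k a ∈ pG Y i := by
  intro m
  rw [coeff_monomial]
  split_ifs
  · exact ha
  · exact Submodule.zero_mem _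

theorem pG_C {i : ℤ} {a : Y.carrier} (ha : a ∈ Y.grading i) : C a ∈ pG Y i := by
  simpa using pG_monomial ha 0

theorem pG_ev {i : ℤ} {p : Y.carrier[X]} (hp : p ∈ pG Y i) : ev1 Y p ∈ Y.grading i := by
  have : ev1 Y p = p.sum (fun _ a => a) := by
    simp [ev1, eval₂RingHom', eval₂_eq_sum]
  rw [this, Polynomial.sum_def]
  exact Submodule.sum_mem _ (fun k _ => hp k)

end Poly

section Path

variable {X₀ Y : CDGA}

/-- The ambient ring of the path object. -/
abbrev PR (X₀ Y : CDGA) : Type :=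
  X₀.carrier × Y.carrier[X] × Matrix (Fin 2) (Fin 2) Y.carrier[X]

/-- The graded pieces of the path object: triples `(x, p, p + dt q)` with `p(0) = f x`. -/
def PZ (f : CDGAHom X₀ Y) (n : ℤ) : Submodule ℚ (PR X₀ Y) where
  carrier := {z | z.1 ∈ X₀.grading n ∧ z.2.1 ∈ pG Y n ∧ z.2.1.coeff 0 = f.toFun z.1 ∧
    z.2.2 0 0 = ((-1 : ℚ) ^ n) • z.2.1 ∧ z.2.2 1 1 = z.2.1 ∧ z.2.2 1 0 = 0 ∧
    z.2.2 0 1 ∈ pG Y (n - 1)}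
  zero_mem' := by
    refine ⟨Submodule.zero_mem _, Submodule.zero_mem _, ?_, ?_, ?_, ?_, Submodule.zero_mem _⟩ <;> simp
  add_mem' := by
    rintro a b ⟨h1, h2, h3, h4, h5, h6, h7⟩ ⟨k1, k2, k3, k4, k5, k6, k7⟩
    refine ⟨Submodule.add_mem _ h1 k1, Submodule.add_mem _ h2 k2, ?_, ?_, ?_, ?_,
      Submodule.add_mem _ h7 k7⟩ <;> simp [*]
  smul_mem' := by
    rintro c a ⟨h1, h2, h3, h4, h5, h6, h7⟩
    refine ⟨Submodule.smul_mem _ _ h1, Submodule.smul_mem _ _ h2, ?_, ?_, ?_, ?_,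
      Submodule.smul_mem _ _ h7⟩
    · simp [h3]
    · simp [h4, smul_comm c]
    · simp [h5]
    · simp [h6]

/-- The differential of the path object. -/
noncomputable def PD (X₀ Y : CDGA) : PR X₀ Y →ₗ[ℚ] PR X₀ Y where
  toFun z := (X₀.d z.1, pD Y z.2.1,
    !![-(pD Y (z.2.2 0 0)), derivative (z.2.2 1 1) - pD Y (z.2.2 0 1); 0, pD Y (z.2.2 1 1)])
  map_add' := by
    intro a b
    refine Prod.ext (by simp) (Prod.ext (by simp) ?_)
    ext i j : 2
    fin_cases i <;> fin_cases j <;> simp <;> abel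
  map_smul' := by
    intro c a
    refine Prod.ext (by simp) (Prod.ext (by simp) ?_)
    ext i j : 2
    fin_cases i <;> fin_cases j <;> simp [smul_sub, derivative_smul]

theorem PD00 (z : PR X₀ Y) : (PD X₀ Y z).2.2 0 0 = -(pD Y (z.2.2 0 0)) := by simp [PD]
theorem PD01 (z : PR X₀ Y) :
    (PD X₀ Y z).2.2 0 1 = derivative (z.2.2 1 1) - pD Y (z.2.2 0 1) := by simp [PD]
theorem PD10 (z : PR X₀ Y) : (PD X₀ Y z).2.2 1 0 = 0 := by simp [PD]
theorem PD11 (z : PR X₀ Y) : (PD X₀ Y z).2.2 1 1 = pD Y (z.2.2 1 1) := by simp [PD]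

theorem sign_cases (i : ℤ) : ((-1 : ℚ) ^ i) = 1 ∨ ((-1 : ℚ) ^ i) = -1 := by
  rcases Int.even_or_odd i with h | h
  · left; exact h.neg_one_zpow
  · right; exact h.neg_one_zpow

theorem sign_succ (i : ℤ) : ((-1 : ℚ) ^ (i + 1)) = - (-1) ^ i := by
  rw [zpow_add₀ (by norm_num)]; simp

theorem sign_pred (i : ℤ) : ((-1 : ℚ) ^ (i - 1)) = - (-1) ^ i := by
  rw [zpow_sub₀ (by norm_num), zpow_one, div_neg, div_one]

theorem path_preC (f : CDGAHom X₀ Y) : PreC (PZ f) (PD X₀ Y) where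
  one_mem := by
    refine ⟨X₀.one_mem, ?_, ?_, ?_, ?_, ?_, ?_⟩
    · exact pG_C Y.one_mem
    · simp
    · simp
    · simp
    · simp
    · simp
  mul_mem := by
    rintro i j a b ⟨h1, h2, h3, h4, h5, h6, h7⟩ ⟨k1, k2, k3, k4, k5, k6, k7⟩
    refine ⟨X₀.mul_mem h1 k1, pG_mul h2 k2, ?_, ?_, ?_, ?_, ?_⟩
    · simp [mul_coeff_zero, h3, k3]
    · simp only [Prod.snd_mul, Prod.fst_mul, Matrix.mul_apply, Fin.sum_univ_two, h4, k4, k6,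
        mul_zero, add_zero, smul_mul_assoc, mul_smul_comm, smul_smul]
      rw [zpow_add₀ (by norm_num), mul_comm]
    · simp [Matrix.mul_apply, h5, k5, h6]
    · simp [Matrix.mul_apply, h6, k6]
    · simp only [Prod.snd_mul, Matrix.mul_apply, Fin.sum_univ_two, h4, k5]
      refine Submodule.add_mem _ ?_ ?_
      · rw [smul_mul_assoc]
        refine Submodule.smul_mem _ _ ?_
        have := pG_mul h2 k7
        rwa [show i + (j - 1) = i + j - 1 by ring] at this
      · have := pG_mul h7 k2
        rwa [show i - 1 + j = i + j - 1 by ring] at this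
  gcomm := by
    rintro i j a b ⟨h1, h2, h3, h4, h5, h6, h7⟩ ⟨k1, k2, k3, k4, k5, k6, k7⟩
    have e1 := pG_comm h2 k2
    have e2 := pG_comm h2 k7
    have e3 := pG_comm h7 k2
    have s1 : ((-1 : ℚ) ^ (i * (j - 1))) = (-1) ^ (i * j) * (-1) ^ i := by
      rw [show i * (j - 1) = i * j - i by ring, zpow_sub₀ (by norm_num)]
      rcases sign_cases i with h | h <;> simp [h, div_neg]
    have s2 : ((-1 : ℚ) ^ ((i - 1) * j)) = (-1) ^ (i * j) * (-1) ^ j := by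
      rw [show (i - 1) * j = i * j - j by ring, zpow_sub₀ (by norm_num)]
      rcases sign_cases j with h | h <;> simp [h, div_neg]
    have s3 : ((-1 : ℚ) ^ (i + j)) = (-1) ^ i * (-1) ^ j := zpow_add₀ (by norm_num) _ _
    rw [s1] at e2
    rw [s2] at e3
    refine Prod.ext (X₀.gcomm h1 k1) (Prod.ext e1 ?_)
    ext r s : 2
    generalize ((-1 : ℚ) ^ (i * j)) = u at *
    fin_cases r <;> fin_cases s
    · simp [Matrix.mul_apply, h4, k4, h6, k6, e1, smul_smul]
      ring_nf
    · simp [Matrix.mul_apply, h4, k4, h5, k5, e2, e3, smul_smul]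
      rcases sign_cases i with h | h <;> rcases sign_cases j with h' | h' <;> simp [h, h'] <;> abel
    · simp [Matrix.mul_apply, h6, k6]
    · simp [Matrix.mul_apply, h5, k5, h6, k6, e1]
  d_mem := by
    rintro i a ⟨h1, h2, h3, h4, h5, h6, h7⟩
    refine ⟨X₀.d_mem h1, pG_D h2, ?_, ?_, ?_, ?_, ?_⟩
    · simp [PD, coeff_pD, h3, f.comm_d]
    · simp [PD, h4, sign_succ]
    · simp [PD, h5]
    · simp [PD]
    · have e1 := pG_deriv h2
      have e2 := pG_D h7
      rw [show i - 1 + 1 = i by ring] at e2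
      simp only [PD, h5, LinearMap.coe_mk, AddHom.coe_mk, show i + 1 - 1 = i by ring]
      exact Submodule.sub_mem _ e1 e2
  d_sq := by
    rintro i a ⟨h1, h2, h3, h4, h5, h6, h7⟩
    refine Prod.ext ?_ (Prod.ext ?_ ?_)
    · simp [PD, X₀.d_sq]
    · simp [PD, pD_pD]
    · ext r s : 2
      fin_cases r <;> fin_cases s <;> simp [PD, pD_pD, pD_deriv]
  leibniz := by
    rintro i j a b ⟨h1, h2, h3, h4, h5, h6, h7⟩ ⟨k1, k2, k3, k4, k5, k6, k7⟩
    have e1 := pG_leibniz h2 b.2.1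
    have e2 := pG_leibniz h2 (b.2.2 0 1)
    have e3 := pG_leibniz h7 b.2.1
    rw [sign_pred] at e3
    refine Prod.ext (X₀.leibniz h1 _) (Prod.ext e1 ?_)
    have m (M N : Matrix (Fin 2) (Fin 2) Y.carrier[X]) (r s : Fin 2) :
        (M * N) r s = M r 0 * N 0 s + M r 1 * N 1 s := by
      rw [Matrix.mul_apply, Fin.sum_univ_two]
    refine Matrix.ext fun r s => ?_
    fin_cases r <;> fin_cases s
    · change (PD X₀ Y (a * b)).2.2 0 0 = (PD X₀ Y a * b + ((-1 : ℚ) ^ i) • (a * PD X₀ Y b)).2.2 0 0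
      simp only [Prod.snd_add, Prod.snd_mul, Prod.smul_snd, Matrix.add_apply, Matrix.smul_apply, m,
        PD00, PD01, PD10, PD11, h4, k4, h6, k6, mul_zero, add_zero, smul_mul_assoc,
        mul_smul_comm, map_smul, e1, smul_add, smul_neg, mul_neg, neg_mul]
      rcases sign_cases i with h | h <;> rcases sign_cases j with h' | h' <;>
        simp only [h, h', one_smul, neg_smul, neg_neg, smul_neg] <;> abel
    · change (PD X₀ Y (a * b)).2.2 0 1 = (PD X₀ Y a * b + ((-1 : ℚ) ^ i) • (a * PD X₀ Y b)).2.2 0 1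
      simp only [Prod.snd_add, Prod.snd_mul, Prod.smul_snd, Matrix.add_apply, Matrix.smul_apply, m,
        PD00, PD01, PD10, PD11, h4, k4, h6, k6, h5, k5, mul_zero, zero_mul, zero_add, add_zero,
        smul_mul_assoc,
        mul_smul_comm, map_smul, map_add, derivative_mul, e2, e3, smul_add, smul_neg, mul_neg, neg_mul,
        mul_sub, sub_mul, smul_sub]
      rcases sign_cases i with h | h <;>
        simp only [h, one_smul, neg_smul, neg_neg, smul_neg] <;> abel
    · change (PD X₀ Y (a * b)).2.2 1 0 = (PD X₀ Y a * b + ((-1 : ℚ) ^ i) • (a * PD X₀ Y b)).2.2 1 0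
      simp only [Prod.snd_add, Prod.snd_mul, Prod.smul_snd, Matrix.add_apply, Matrix.smul_apply, m,
        PD00, PD01, PD10, PD11, h6, k6, mul_zero, zero_mul, add_zero, smul_zero]
    · change (PD X₀ Y (a * b)).2.2 1 1 = (PD X₀ Y a * b + ((-1 : ℚ) ^ i) • (a * PD X₀ Y b)).2.2 1 1
      simp only [Prod.snd_add, Prod.snd_mul, Prod.smul_snd, Matrix.add_apply, Matrix.smul_apply, m,
        PD00, PD01, PD10, PD11, h6, k6, h5, k5, mul_zero, zero_mul, zero_add, e1]

end Path

end TRC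

set_option linter.unusedSectionVars false
set_option linter.deprecated false
set_option linter.unusedSimpArgs false

namespace TRC

open Polynomial

/-! ### Lifting through quasi-isomorphisms -/

theorem exact_hom (X : CDGA) {n : ℤ} {z : X.carrier} (hz : z ∈ X.grading (n + 1))
    (h : z ∈ LinearMap.range X.d) : ∃ y ∈ X.grading n, X.d y = z := by
  obtain ⟨y, rfl⟩ := h
  refine ⟨proj X.internal n y, proj_mem _ _ _, ?_⟩
  rw [proj_comm X.internal X.internal X.d 1 (fun n y hy => X.d_mem hy), proj_same _ hz]

theorem surj_hom {X Y : CDGA} {f : CDGAHom X Y} (hf : f.IsQuasiIso) {n : ℤ} {y : Y.carrier}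
    (hy : y ∈ Y.grading n) (hd : Y.d y = 0) :
    ∃ x ∈ X.grading n, X.d x = 0 ∧ ∃ b ∈ Y.grading (n - 1), f.toFun x - y = Y.d b := by
  obtain ⟨x, hx, b, hb⟩ := hf.2 y hd
  have c1 := proj_comm X.internal X.internal X.d 1 (fun n y hy => X.d_mem hy) n x
  have c2 := proj_comm Y.internal Y.internal Y.d 1 (fun n y hy => Y.d_mem hy) (n - 1) b
  have c3 := proj_comm X.internal Y.internal f.toFun.toLinearMap 0
    (fun n y hy => by simpa using f.map_grading n y hy) n x
  refine ⟨proj X.internal n x, proj_mem _ _ _, ?_, proj Y.internal (n - 1) b, proj_mem _ _ _, ?_⟩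
  · rw [c1, hx, map_zero]
  · rw [c2, hb, sub_add_cancel, map_sub, proj_same _ hy]
    simp only [add_zero, AlgHom.toLinearMap_apply] at c3
    rw [c3]

theorem path_ker {X₀ Y : CDGA} {f : CDGAHom X₀ Y} (hf : f.IsQuasiIso) (n : ℤ) (z : PR X₀ Y)
    (hz : z ∈ PZ f (n + 1)) (hd : PD X₀ Y z = 0) (he : ev1 Y z.2.1 = 0) :
    ∃ z' ∈ PZ f n, PD X₀ Y z' = z ∧ ev1 Y z'.2.1 = 0 := by
  obtain ⟨h1, h2, h3, h4, h5, h6, h7⟩ := hz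
  obtain ⟨x, p, M⟩ := z
  have d1 : X₀.d x = 0 := congrArg (fun z => z.1) hd
  have d2 : derivative (M 1 1) - pD Y (M 0 1) = 0 := by
    have := congrArg (fun z => z.2.2 0 1) hd
    simpa [PD] using this
  dsimp only at h1 h2 h3 h4 h5 h6 h7 he
  set q := M 0 1 with hq
  rw [h5, sub_eq_zero] at d2
  rw [add_sub_cancel_right] at h7
  have hp : p = C (f.toFun x) + pD Y (pI Y q) := by
    have := pI_deriv p
    rw [d2, ← pD_pI, h3] at this
    rw [this]; abel
  have hx : f.toFun x ∈ LinearMap.range Y.d := by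
    rw [hp, map_add, ev1_C, ev1_pD] at he
    refine ⟨- ev1 Y (pI Y q), ?_⟩
    rw [map_neg]
    exact (eq_neg_of_add_eq_zero_left he).symm
  obtain ⟨x', hx', rfl⟩ := exact_hom X₀ h1 (hf.1 x d1 hx)
  have hc : f.toFun x' + ev1 Y (pI Y q) ∈ Y.grading n :=
    Submodule.add_mem _ (f.map_grading _ _ hx') (pG_ev (pG_I h7))
  have hcd : Y.d (f.toFun x' + ev1 Y (pI Y q)) = 0 := by
    rw [map_add, ← f.comm_d, ← ev1_pD]
    rw [hp, map_add, ev1_C] at he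
    exact he
  obtain ⟨x'', hx'', dx'', b, hb, hb'⟩ := surj_hom hf hc hcd
  have hb1 : Y.d b ∈ Y.grading n := by
    have := Y.d_mem hb
    rwa [sub_add_cancel] at this
  have dx1 : X₀.d (x' - x'') = X₀.d x' := by rw [map_sub, dx'', sub_zero]
  have hx1 : x' - x'' ∈ X₀.grading n := Submodule.sub_mem _ hx' hx''
  have hfx1 : f.toFun (x' - x'') = - ev1 Y (pI Y q) - Y.d b := by
    rw [← hb', map_sub]; abel
  have hdf : Y.d (f.toFun (x' - x'')) = f.toFun (X₀.d x') := by rw [← f.comm_d, dx1]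
  generalize x' - x'' = x1 at *
  set P : Y.carrier[X] := C (f.toFun x1) + pI Y q + monomial 1 (Y.d b) with hP
  have hP1 : pD Y P = p := by
    rw [hP, map_add, map_add, pD_C, pD_monomial, Y.d_sq, monomial_zero_right, add_zero, hp, hdf]
  have hP2 : derivative P = q + C (Y.d b) := by
    rw [hP, derivative_add, derivative_add, derivative_C, deriv_pI, derivative_monomial]
    simp
  have hP0 : P.coeff 0 = f.toFun x1 := by
    rw [hP, coeff_add, coeff_add, coeff_pI_zero, coeff_monomial]
    simp
  refine ⟨(x1, P, !![((-1 : ℚ) ^ n) • P, C b; 0, P]), ⟨hx1, ?_, hP0, ?_, ?_, ?_, ?_⟩, ?_, ?_⟩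
  · exact Submodule.add_mem _ (Submodule.add_mem _ (pG_C (f.map_grading _ _ hx1)) (pG_I h7))
      (pG_monomial hb1 1)
  · simp
  · simp
  · simp
  · simpa using pG_C hb
  · refine Prod.ext dx1 (Prod.ext hP1 ?_)
    refine Matrix.ext fun r s => ?_
    fin_cases r <;> fin_cases s
    · change (PD X₀ Y _).2.2 0 0 = M 0 0
      rw [PD00, h4, sign_succ]
      simp [hP1]
    · change (PD X₀ Y _).2.2 0 1 = M 0 1
      rw [PD01]
      simp [hP2, pD_C, ← hq]
    · change (PD X₀ Y _).2.2 1 0 = M 1 0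
      rw [PD10, h6]
    · change (PD X₀ Y _).2.2 1 1 = M 1 1
      rw [PD11, h5]
      simp [hP1]
  · change ev1 Y P = 0
    rw [hP, map_add, map_add, ev1_C, ev1_monomial, hfx1]
    abel

theorem path_surj {X₀ Y : CDGA} (f : CDGAHom X₀ Y) (n : ℤ) (y : Y.carrier)
    (hy : y ∈ Y.grading n) : ∃ z ∈ PZ f n, ev1 Y z.2.1 = y := by
  refine ⟨(0, monomial 1 y, !![((-1 : ℚ) ^ n) • monomial 1 y, 0; 0, monomial 1 y]),
    ⟨Submodule.zero_mem _, pG_monomial hy 1, ?_, ?_, ?_, ?_, ?_⟩, ev1_monomial 1 y⟩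
  · simp [coeff_monomial]
  · simp
  · simp
  · simp
  · simp

section

variable {A : CDGA} {ι : Type} [Fintype ι] [DecidableEq ι] {l : List ι}
    {deg : ι → ℤ} {g : ι → A.carrier}

theorem Gens.lift_qi (G : Gens A l deg g) (hdec : ∀ x, A.d (g x) ∈ A.decomposables)
    {X₀ Y : CDGA} {f : CDGAHom X₀ Y} (hf : f.IsQuasiIso) {φ : CDGAHom A Y} (hφ : φ.IsQuasiIso) :
    ∃ ψ : CDGAHom A X₀, ψ.IsQuasiIso := by
  obtain ⟨Ψ, hm, hd, he⟩ := G.lift hdec (path_preC f)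
    ((ev1 Y).comp ((AlgHom.fst ℚ _ _).comp (AlgHom.snd ℚ _ _)))
    (fun n z _ => ev1_pD _) (path_surj f) (path_ker hf) φ
  have he' : ∀ a, ev1 Y (Ψ a).2.1 = φ.toFun a := he
  let ψ : CDGAHom A X₀ :=
    { toFun := (AlgHom.fst ℚ _ _).comp Ψ
      map_grading := fun i x hx => (hm i x hx).1
      comm_d := fun x => (congrArg (fun z => z.1) (hd x)).symm }
  have hψ : ∀ a, ψ.toFun a = (Ψ a).1 := fun a => rfl
  have r1 : ∀ a, (Ψ a).2.2 1 1 = (Ψ a).2.1 := by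
    let L1 : A.carrier →ₗ[ℚ] Y.carrier[X] :=
      { toFun := fun a => (Ψ a).2.2 1 1, map_add' := by intros; simp, map_smul' := by intros; simp }
    let L2 : A.carrier →ₗ[ℚ] Y.carrier[X] :=
      { toFun := fun a => (Ψ a).2.1, map_add' := by intros; simp, map_smul' := by intros; simp }
    intro a
    exact linear_ext A.internal (f := L1) (g := L2) (fun n y hy => (hm n y hy).2.2.2.2.1) a
  have r2 : ∀ a, (Ψ a).2.1.coeff 0 = f.toFun (Ψ a).1 := by
    let L1 : A.carrier →ₗ[ℚ] Y.carrier :=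
      { toFun := fun a => (Ψ a).2.1.coeff 0, map_add' := by intros; simp,
        map_smul' := by intros; simp }
    let L2 : A.carrier →ₗ[ℚ] Y.carrier :=
      { toFun := fun a => f.toFun (Ψ a).1, map_add' := by intros; simp,
        map_smul' := by intros; simp }
    intro a
    exact linear_ext A.internal (f := L1) (g := L2) (fun n y hy => (hm n y hy).2.2.1) a
  have key : ∀ a, A.d a = 0 →
      ∃ b, φ.toFun a = f.toFun (ψ.toFun a) + Y.d b := by
    intro a ha
    have h0 := hd a
    rw [ha, map_zero] at h0
    have h1 := PD01 (Ψ a)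
    rw [h0, r1] at h1
    have h2 : derivative (Ψ a).2.1 = pD Y ((Ψ a).2.2 0 1) := by
      have : (0 : Y.carrier[X]) = derivative (Ψ a).2.1 - pD Y ((Ψ a).2.2 0 1) := h1
      exact (sub_eq_zero.1 this.symm)
    have h3 := pI_deriv (Ψ a).2.1
    rw [h2, ← pD_pI, r2] at h3
    refine ⟨ev1 Y (pI Y ((Ψ a).2.2 0 1)), ?_⟩
    rw [← he', ← ev1_pD, h3, map_sub, ev1_C, hψ]
    abel
  refine ⟨ψ, ?_, ?_⟩
  · rintro a ha ⟨x, hx⟩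
    obtain ⟨b, hb⟩ := key a ha
    refine hφ.1 a ha ⟨f.toFun x + b, ?_⟩
    rw [hb, map_add, ← hx, f.comm_d]
  · intro x hx
    obtain ⟨a, ha, c, hc⟩ := hφ.2 (f.toFun x) (by rw [← f.comm_d, hx, map_zero])
    obtain ⟨b, hb⟩ := key a ha
    refine ⟨a, ha, hf.1 _ ?_ ⟨c - b, ?_⟩⟩
    · rw [map_sub, hx, sub_zero, ← ψ.comm_d, ha, map_zero]
    · rw [map_sub, map_sub, hc, hb]; abel

theorem comp_qi {X Y W : CDGA} {f : CDGAHom X Y} (hf : f.IsQuasiIso) {h : CDGAHom Y W}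
    (hh : h.IsQuasiIso) : ∃ ψ : CDGAHom X W, ψ.IsQuasiIso := by
  refine ⟨⟨h.toFun.comp f.toFun, fun i x hx => h.map_grading _ _ (f.map_grading _ _ hx),
    fun x => by simp [f.comm_d, h.comm_d]⟩, ?_, ?_⟩
  · intro x hx hr
    exact hf.1 x hx (hh.1 _ (by rw [← f.comm_d, hx, map_zero]) hr)
  · intro w hw
    obtain ⟨y, hy, b, hb⟩ := hh.2 w hw
    obtain ⟨x, hx, c, hc⟩ := hf.2 y hy
    refine ⟨x, hx, b + h.toFun c, ?_⟩
    rw [map_add, ← h.comm_d, hc, hb]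
    simp

theorem Gens.exists_formal (G : Gens A l deg g) (hdec : ∀ x, A.d (g x) ∈ A.decomposables)
    (hform : A.IsFormal) : ∃ (B : CDGA) (φ : CDGAHom A B), B.d = 0 ∧ φ.IsQuasiIso := by
  obtain ⟨B, hB, hc⟩ := hform
  have key : ∀ X Y : CDGA, CDGAConnected X Y →
      ((∃ φ : CDGAHom A X, φ.IsQuasiIso) ↔ (∃ φ : CDGAHom A Y, φ.IsQuasiIso)) := by
    intro X Y h
    induction h with
    | rel X Y h =>
      obtain ⟨f, hf⟩ := h
      exact ⟨fun ⟨φ, hφ⟩ => comp_qi hφ hf, fun ⟨φ, hφ⟩ => G.lift_qi hdec hf hφ⟩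
    | refl => rfl
    | symm _ _ _ ih => exact ih.symm
    | trans _ _ _ _ _ ih1 ih2 => exact ih1.trans ih2
  obtain ⟨φ, hφ⟩ := (key A B hc).1 ⟨⟨AlgHom.id ℚ _, fun _ _ h => h, fun _ => rfl⟩,
    fun _ _ h => h, fun y hy => ⟨y, hy, by simp⟩⟩
  exact ⟨B, φ, hB, hφ⟩

/-- The grading automorphism of a formal minimal algebra. -/
theorem Gens.exists_alpha (G : Gens A l deg g) (hdec : ∀ x, A.d (g x) ∈ A.decomposables)
    {B : CDGA} {φ : CDGAHom A B} (hB : B.d = 0) (hφ : φ.IsQuasiIso) :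
    ∃ α : A.carrier →ₐ[ℚ] A.carrier, (∀ n, ∀ a ∈ A.grading n, α a ∈ A.grading n) ∧
      (∀ a, A.d (α a) = α (A.d a)) ∧
      ∀ n, ∀ a ∈ A.grading n, φ.toFun (α a) = ((2 : ℚ) ^ n) • φ.toFun a := by
  have hBd : ∀ b, B.d b = 0 := fun b => by rw [hB]; rfl
  have hφd : ∀ a, φ.toFun (A.d a) = 0 := fun a => by rw [φ.comm_d, hBd]
  obtain ⟨φ₂, h2⟩ := G.exists_hom (fun x => ((2 : ℚ) ^ deg x) • φ.toFun (g x)) (by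
    intro x y
    rw [smul_mul_smul_comm, smul_mul_smul_comm, ← map_mul, ← map_mul, G.koszul x y, map_smul,
      smul_comm, mul_comm ((2 : ℚ) ^ deg x)])
  have h2' : ∀ n, ∀ a ∈ A.grading n, φ₂ a = ((2 : ℚ) ^ n) • φ.toFun a := by
    intro n a ha
    have := G.hom_mem (R := B.carrier × B.carrier)
      (Z := fun n => LinearMap.eqLocus (LinearMap.snd ℚ B.carrier B.carrier)
        (((2 : ℚ) ^ n) • LinearMap.fst ℚ B.carrier B.carrier)) (by simp) (by
        intro i j a b ha hb
        simp only [LinearMap.mem_eqLocus, LinearMap.snd_apply, LinearMap.smul_apply,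
          LinearMap.fst_apply] at ha hb ⊢
        rw [Prod.snd_mul, Prod.fst_mul, ha, hb, smul_mul_smul_comm, zpow_add₀ (by norm_num)])
      (Ψ := φ.toFun.prod φ₂) (by intro x; simp [h2]) n a ha
    simpa using this
  let Φ : CDGAHom A B := ⟨φ₂, fun i x hx => by
      rw [h2' i x hx]; exact Submodule.smul_mem _ _ (φ.map_grading _ _ hx), fun x => by
      rw [hBd]
      refine linear_ext A.internal (f := φ₂.toLinearMap ∘ₗ A.d) (g := 0) (fun n y hy => ?_) x
      change φ₂ (A.d y) = 0
      rw [h2' _ _ (A.d_mem hy), hφd, smul_zero]⟩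
  have hsurj : ∀ n, ∀ y ∈ B.grading n, ∃ z ∈ A.grading n, A.d z = 0 ∧ φ.toFun z = y := by
    intro n y hy
    obtain ⟨x, hx, dx, b, -, hb⟩ := surj_hom hφ hy (hBd y)
    rw [hBd, sub_eq_zero] at hb
    exact ⟨x, hx, dx, hb⟩
  obtain ⟨α, ha, hb, hc⟩ := G.lift hdec (CDGA_preC A) φ.toFun (fun n z _ => φ.comm_d z)
    (fun n y hy => by
      obtain ⟨z, h1, -, h2⟩ := hsurj n y hy
      exact ⟨z, h1, h2⟩)
    (fun n z hz hd hf => by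
      obtain ⟨y, hy, rfl⟩ := exact_hom A hz (hφ.1 z hd ⟨0, by rw [hf, map_zero]⟩)
      obtain ⟨c, hc, hcd, hcy⟩ := hsurj n _ (φ.map_grading _ _ hy)
      exact ⟨y - c, Submodule.sub_mem _ hy hc, by rw [map_sub, hcd, sub_zero],
        by rw [map_sub, hcy, sub_self]⟩) Φ
  exact ⟨α, ha, hb, fun n a h => by rw [hc]; exact h2' n a h⟩

end

end TRC

set_option linter.unusedSectionVars false
set_option linter.deprecated false
set_option linter.unusedSimpArgs false

namespace TRC

open Polynomial Module

/-! ### Weights -/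

section Lin

variable {M : Type} [AddCommGroup M] [Module ℚ M]

/-- Generalized eigenspace for the eigenvalue `2 ^ w`. -/
def E (α : M →ₗ[ℚ] M) (w : ℕ) : Submodule ℚ M := Module.End.maxGenEigenspace α ((2 : ℚ) ^ w)

theorem mem_E {α : M →ₗ[ℚ] M} {w : ℕ} {x : M} :
    x ∈ E α w ↔ ∃ k : ℕ, ((α - ((2 : ℚ) ^ w) • (1 : Module.End ℚ M)) ^ k) x = 0 :=
  Module.End.mem_maxGenEigenspace α _ x

theorem E_step {α : M →ₗ[ℚ] M} {w : ℕ} {x : M} (h : α x - ((2 : ℚ) ^ w) • x ∈ E α w) :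
    x ∈ E α w := by
  obtain ⟨k, hk⟩ := mem_E.1 h
  refine mem_E.2 ⟨k + 1, ?_⟩
  rw [pow_succ, Module.End.mul_apply]
  exact hk

theorem E_stable {α T : M →ₗ[ℚ] M} (hc : ∀ x, T (α x) = α (T x)) {w : ℕ} {x : M}
    (h : x ∈ E α w) : T x ∈ E α w := by
  obtain ⟨k, hk⟩ := mem_E.1 h
  refine mem_E.2 ⟨k, ?_⟩
  have : ∀ (k : ℕ) (x : M), ((α - ((2 : ℚ) ^ w) • (1 : Module.End ℚ M)) ^ k) (T x) =
      T (((α - ((2 : ℚ) ^ w) • (1 : Module.End ℚ M)) ^ k) x) := by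
    intro k
    induction k with
    | zero => intro x; simp
    | succ k ih =>
      intro x
      rw [pow_succ, Module.End.mul_apply, Module.End.mul_apply, ← ih]
      congr 1
      simp [hc]
  rw [this, hk, map_zero]

/-- The sum of the positive weight spaces. -/
def S (α : M →ₗ[ℚ] M) : Submodule ℚ M := ⨆ w : ℕ, E α (w + 1)

theorem S_stable {α T : M →ₗ[ℚ] M} (hc : ∀ x, T (α x) = α (T x)) {x : M}
    (h : x ∈ S α) : T x ∈ S α := by
  have : S α ≤ (S α).comap T := by
    refine iSup_le fun w x hx => ?_
    exact (le_iSup (fun w => E α (w + 1)) w) (E_stable hc hx)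
  exact this h

theorem E_surj {α : M →ₗ[ℚ] M} {v w : ℕ} (hvw : v ≠ w) {y : M} (hy : y ∈ E α v) :
    ∃ x ∈ E α v, α x - ((2 : ℚ) ^ w) • x = y := by
  obtain ⟨k, hk⟩ := mem_E.1 hy
  induction k generalizing y with
  | zero => exact ⟨0, Submodule.zero_mem _, by simpa using hk.symm⟩
  | succ k ih =>
    rw [pow_succ, Module.End.mul_apply] at hk
    have hy' : α y - ((2 : ℚ) ^ v) • y ∈ E α v := mem_E.2 ⟨k, hk⟩
    obtain ⟨x, hx, hxy⟩ := ih hy' hk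
    have hne : (2 : ℚ) ^ v - 2 ^ w ≠ 0 := by
      rw [sub_ne_zero]
      intro h
      exact hvw (pow_right_injective₀ (by norm_num) (by norm_num) h)
    refine ⟨((2 : ℚ) ^ v - 2 ^ w)⁻¹ • (y - x), Submodule.smul_mem _ _ (Submodule.sub_mem _ hy hx), ?_⟩
    have : (α (y - x) - ((2 : ℚ) ^ w) • (y - x)) = ((2 : ℚ) ^ v - 2 ^ w) • y := by
      rw [map_sub, smul_sub, sub_smul]
      have : α x = α y - ((2 : ℚ) ^ v) • y + ((2 : ℚ) ^ w) • x := by rw [← hxy]; abel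
      rw [this]; abel
    rw [map_smul, smul_comm, ← smul_sub, this, smul_smul, inv_mul_cancel₀ hne, one_smul]

theorem S_step {α : M →ₗ[ℚ] M} {w : ℕ} {x : M} (h : α x - ((2 : ℚ) ^ (w + 1)) • x ∈ S α) :
    x ∈ S α := by
  have hle : ∀ v, E α (v + 1) ≤ S α := fun v => le_iSup (fun w => E α (w + 1)) v
  have key : ∀ y ∈ S α, ∃ x' ∈ S α, ∃ z ∈ E α (w + 1),
      y = α x' - ((2 : ℚ) ^ (w + 1)) • x' + z := by
    intro y hy
    refine Submodule.iSup_induction (fun w => E α (w + 1)) (motive := fun y => ∃ x' ∈ S α,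
      ∃ z ∈ E α (w + 1), y = α x' - ((2 : ℚ) ^ (w + 1)) • x' + z) hy ?_ ?_ ?_
    · intro v y hy
      by_cases hvw : v = w
      · subst hvw
        exact ⟨0, Submodule.zero_mem _, y, hy, by simp⟩
      · obtain ⟨x, hx, hxy⟩ := E_surj (w := w + 1) (by omega) hy
        exact ⟨x, hle v hx, 0, Submodule.zero_mem _, by simp [hxy]⟩
    · exact ⟨0, Submodule.zero_mem _, 0, Submodule.zero_mem _, by simp⟩
    · rintro y y' ⟨a, ha, b, hb, h1⟩ ⟨a', ha', b', hb', h2⟩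
      refine ⟨a + a', Submodule.add_mem _ ha ha', b + b', Submodule.add_mem _ hb hb', ?_⟩
      rw [h1, h2, map_add, smul_add]; abel
  obtain ⟨x', hx', z, hz, he⟩ := key _ h
  have : x - x' ∈ E α (w + 1) := by
    refine E_step ?_
    have : α (x - x') - ((2 : ℚ) ^ (w + 1)) • (x - x') = z := by
      rw [map_sub, smul_sub, ← add_right_inj (α x' - (2 : ℚ) ^ (w + 1) • x'), ← he]
      abel
    rwa [this]
  have h2 := Submodule.add_mem _ (hle _ this) hx'
  rwa [sub_add_cancel] at h2

theorem S_kill {α : M →ₗ[ℚ] M} {y : M} (hy : y ∈ S α) :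
    ∃ q : ℚ[X], (∀ x, aeval (R := ℚ) (A := Module.End ℚ M) α q x ∈ S α → x ∈ S α) ∧
      aeval (R := ℚ) (A := Module.End ℚ M) α q y = 0 := by
  refine Submodule.iSup_induction (fun w => E α (w + 1)) (motive := fun y => ∃ q : ℚ[X],
      (∀ x, aeval (R := ℚ) (A := Module.End ℚ M) α q x ∈ S α → x ∈ S α) ∧
      aeval (R := ℚ) (A := Module.End ℚ M) α q y = 0) hy ?_ ?_ ?_
  · intro w y hy
    obtain ⟨k, hk⟩ := mem_E.1 hy
    have h1 : aeval (R := ℚ) (A := Module.End ℚ M) α (X - C ((2 : ℚ) ^ (w + 1))) =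
        (α - ((2 : ℚ) ^ (w + 1)) • (1 : Module.End ℚ M)) := by
      rw [map_sub, aeval_X, aeval_C, Algebra.algebraMap_eq_smul_one]
    refine ⟨(X - C ((2 : ℚ) ^ (w + 1))) ^ k, ?_, ?_⟩
    · rw [map_pow, h1]
      clear hk
      induction k with
      | zero => intro x hx; simpa using hx
      | succ k ih =>
        intro x hx
        rw [pow_succ, Module.End.mul_apply] at hx
        exact S_step (ih _ hx)
    · rw [map_pow, h1, hk]
  · exact ⟨1, fun x hx => by simpa using hx, by simp⟩
  · rintro y y' ⟨q, h1, h2⟩ ⟨q', h1', h2'⟩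
    refine ⟨q * q', ?_, ?_⟩
    · intro x hx
      rw [map_mul, Module.End.mul_apply] at hx
      exact h1' _ (h1 _ hx)
    · have e1 : aeval (R := ℚ) (A := Module.End ℚ M) α (q * q') y' = 0 := by
        rw [map_mul, Module.End.mul_apply, h2', map_zero]
      have e2 : aeval (R := ℚ) (A := Module.End ℚ M) α (q * q') y = 0 := by
        rw [mul_comm, map_mul, Module.End.mul_apply, h2, map_zero]
      rw [map_add, e1, e2, add_zero]

theorem aeval_comm {α T : M →ₗ[ℚ] M} (hc : ∀ x, T (α x) = α (T x)) (q : ℚ[X]) (x : M) :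
    T (aeval (R := ℚ) (A := Module.End ℚ M) α q x) =
      aeval (R := ℚ) (A := Module.End ℚ M) α q (T x) := by
  induction q using Polynomial.induction_on' generalizing x with
  | add p q hp hq => simp [hp, hq]
  | monomial i a =>
    rw [aeval_monomial]
    simp only [Algebra.algebraMap_eq_smul_one, smul_mul_assoc, one_mul, LinearMap.smul_apply,
      map_smul]
    congr 1
    induction i generalizing x with
    | zero => simp
    | succ i ih => rw [pow_succ, Module.End.mul_apply, Module.End.mul_apply, ih, hc]

theorem aeval_mem {α : M →ₗ[ℚ] M} {W : Submodule ℚ M} (hW : ∀ x ∈ W, α x ∈ W) (q : ℚ[X]) {x : M}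
    (hx : x ∈ W) : aeval (R := ℚ) (A := Module.End ℚ M) α q x ∈ W := by
  induction q using Polynomial.induction_on' with
  | add p q hp hq => rw [map_add, LinearMap.add_apply]; exact W.add_mem hp hq
  | monomial i a =>
    rw [aeval_monomial]
    simp only [Algebra.algebraMap_eq_smul_one, smul_mul_assoc, one_mul, LinearMap.smul_apply]
    refine W.smul_mem _ ?_
    induction i with
    | zero => simpa using hx
    | succ i ih => rw [pow_succ', Module.End.mul_apply]; exact hW _ ih

/-- Choosing generators inside a spanning set. -/
theorem choose_gens {I : Type} [Fintype I] {D W : Submodule ℚ M} {g : I → M} {T : Set M}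
    (h0 : (0 : M) ∈ T) (hTW : T ⊆ W) (hWT : W ≤ Submodule.span ℚ T)
    (hW : W ≤ D ⊔ Submodule.span ℚ (Set.range g)) :
    ∃ g' : I → M, (∀ i, g' i ∈ T) ∧ W ≤ D ⊔ Submodule.span ℚ (Set.range g') := by
  classical
  obtain ⟨b, hbT, hbs, hbl⟩ := exists_linearIndependent ℚ (D.mkQ '' T)
  have hb : Set.range (Subtype.val : b → M ⧸ D) ⊆
      Submodule.span ℚ (Set.range (fun i => D.mkQ (g i))) := by
    rintro _ ⟨⟨_, hy⟩, rfl⟩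
    obtain ⟨t, ht, rfl⟩ := hbT hy
    obtain ⟨u, hu, v, hv, huv⟩ := Submodule.mem_sup.1 (hW (hTW ht))
    have : D.mkQ t = D.mkQ v := by
      rw [← huv, map_add, (by simpa using hu : D.mkQ u = 0), zero_add]
    change D.mkQ t ∈ _
    rw [this]
    have h2 := Submodule.mem_map_of_mem (f := D.mkQ) hv
    rw [Submodule.map_span, ← Set.range_comp] at h2
    exact h2
  have hcard := linearIndependent_le_span' _ hbl _ hb
  have hfin : Finite b := LinearIndependent.finite_of_le_span_finite _ hbl _ hb
  have := Fintype.ofFinite b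
  rw [Cardinal.mk_fintype, Nat.cast_le] at hcard
  have hcard2 : Fintype.card b ≤ Fintype.card I := hcard.trans (Fintype.card_range_le _)
  obtain ⟨e⟩ := Function.Embedding.nonempty_of_card_le hcard2
  have hpre : ∀ y : b, ∃ t ∈ T, D.mkQ t = y := fun y => hbT y.2
  choose s hsT hs using hpre
  let g' : I → M := fun i => if h : ∃ y, e y = i then s h.choose else 0
  have hg' : ∀ y, g' (e y) = s y := by
    intro y
    have h : ∃ y', e y' = e y := ⟨y, rfl⟩
    simp only [g', dif_pos h]
    rw [e.injective h.choose_spec]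
  refine ⟨g', ?_, ?_⟩
  · intro i
    simp only [g']
    split_ifs
    · exact hsT _
    · exact h0
  · intro x hx
    have h1 := Submodule.mem_map_of_mem (f := D.mkQ) (hWT hx)
    rw [Submodule.map_span, ← hbs] at h1
    have h2 : Submodule.span ℚ b ≤ (Submodule.span ℚ (Set.range g')).map D.mkQ := by
      rw [Submodule.span_le]
      intro y hy
      exact ⟨g' (e ⟨y, hy⟩), Submodule.subset_span ⟨_, rfl⟩, by rw [hg', hs]⟩
    obtain ⟨v, hv, hvx⟩ := h2 h1
    have : x - v ∈ D := by
      rw [← Submodule.ker_mkQ D, LinearMap.mem_ker, map_sub, hvx, sub_self]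
    exact Submodule.mem_sup.2 ⟨x - v, this, v, hv, by abel⟩

end Lin

section Alg

variable {R : Type} [Ring R] [Algebra ℚ R]

theorem E_mul (α : R →ₐ[ℚ] R) {v w : ℕ} {x y : R} (hx : x ∈ E α.toLinearMap v)
    (hy : y ∈ E α.toLinearMap w) : x * y ∈ E α.toLinearMap (v + w) := by
  obtain ⟨k, hk⟩ := mem_E.1 hx
  obtain ⟨m, hm⟩ := mem_E.1 hy
  obtain ⟨N, hN⟩ : ∃ N, k + m ≤ N := ⟨_, le_rfl⟩
  induction N generalizing k m x y with
  | zero =>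
    obtain rfl : k = 0 := by omega
    have : x = 0 := by simpa using hk
    rw [this, zero_mul]; exact Submodule.zero_mem _
  | succ N ih =>
    cases k with
    | zero =>
      have : x = 0 := by simpa using hk
      rw [this, zero_mul]; exact Submodule.zero_mem _
    | succ k =>
    cases m with
    | zero =>
      have : y = 0 := by simpa using hm
      rw [this, mul_zero]; exact Submodule.zero_mem _
    | succ m =>
      refine E_step ?_
      have e : α.toLinearMap (x * y) - ((2 : ℚ) ^ (v + w)) • (x * y) =
          (α x - ((2 : ℚ) ^ v) • x) * α y + ((2 : ℚ) ^ v) • (x * (α y - ((2 : ℚ) ^ w) • y)) := by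
        simp only [AlgHom.toLinearMap_apply, map_mul, sub_mul, mul_sub, smul_sub, smul_mul_assoc,
          mul_smul_comm, smul_smul, pow_add]
        abel
      rw [e]
      have hk' := hk
      have hm' := hm
      rw [pow_succ, Module.End.mul_apply] at hk' hm'
      refine Submodule.add_mem _ ?_ (Submodule.smul_mem _ _ ?_)
      · refine ih (k := k) (m := m + 1) (mem_E.2 ⟨k, hk'⟩)
          (E_stable (T := α.toLinearMap) (fun _ => rfl) hy) hk' ?_ (by omega)
        have := (Commute.pow_right (show Commute (α.toLinearMap : Module.End ℚ R)
          (α.toLinearMap - ((2 : ℚ) ^ w) • (1 : Module.End ℚ R)) from by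
            refine Commute.sub_right (Commute.refl _) (Commute.smul_right (Commute.one_right _) _)) (m + 1)).eq
        have h2 := congrArg (fun f : Module.End ℚ R => f y) this
        simp only [Module.End.mul_apply, hm, map_zero] at h2
        exact h2.symm
      · exact ih (k := k + 1) (m := m) hx (mem_E.2 ⟨m, hm'⟩) hk hm' (by omega)

theorem S_mul (α : R →ₐ[ℚ] R) {x y : R} (hx : x ∈ S α.toLinearMap) (hy : y ∈ S α.toLinearMap) :
    x * y ∈ S α.toLinearMap := by
  have : S α.toLinearMap * S α.toLinearMap ≤ S α.toLinearMap := by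
    conv_lhs => rw [S, Submodule.iSup_mul]
    refine iSup_le fun v => ?_
    rw [Submodule.mul_iSup]
    refine iSup_le fun w => ?_
    rw [Submodule.mul_le]
    intro a ha b hb
    have := E_mul α ha hb
    rw [show v + 1 + (w + 1) = (v + w + 1) + 1 by ring] at this
    exact (le_iSup (fun w => E α.toLinearMap (w + 1)) (v + w + 1)) this
  exact this (Submodule.mul_mem_mul hx hy)

theorem E_one (α : R →ₐ[ℚ] R) : (1 : R) ∈ E α.toLinearMap 0 :=
  mem_E.2 ⟨1, by simp⟩

end Alg

section

variable {A : CDGA} {ι : Type} [Fintype ι] [DecidableEq ι] {l : List ι}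
    {deg : ι → ℤ} {g : ι → A.carrier}

theorem Gens.grading_le_S (G : Gens A l deg g) (hdec : ∀ x, A.d (g x) ∈ A.decomposables)
    {B : CDGA} {φ : CDGAHom A B} (hφ : φ.IsQuasiIso)
    {α : A.carrier →ₐ[ℚ] A.carrier} (h1 : ∀ n, ∀ a ∈ A.grading n, α a ∈ A.grading n)
    (h2 : ∀ a, A.d (α a) = α (A.d a))
    (h3 : ∀ n, ∀ a ∈ A.grading n, φ.toFun (α a) = ((2 : ℚ) ^ n) • φ.toFun a) (n : ℤ) (hn : 0 < n) :
    A.grading n ≤ S α.toLinearMap := by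
  have key : ∀ N : ℕ, ∀ m : ℤ, 0 < m → m ≤ N → A.grading m ≤ S α.toLinearMap := by
    intro N
    induction N with
    | zero => intro m h h'; push_cast at h'; omega
    | succ N ih =>
      intro m hm hmN
      refine (G.grading_le_dec hm).trans (sup_le ?_ ?_)
      · unfold dec
        rw [Submodule.span_le]
        rintro z ⟨i, j, hi, hj, hij, x, hx, y, hy, rfl⟩
        push_cast at hmN
        exact S_mul α (ih i hi (by omega) hx) (ih j hj (by omega) hy)
      · rw [Submodule.span_le]
        rintro _ ⟨x, hx, rfl⟩
        change deg x = m at hx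
        have hgx := G.mem x
        rw [hx] at hgx
        have hge := G.deg_ge x
        have hdS : A.d (g x) ∈ S α.toLinearMap := by
          have := G.dec_le _ (mem_dec (A.d_mem hgx) (hdec x))
          refine (Submodule.span_le.2 ?_) this
          rintro z ⟨i, j, hi, hj, hij, x, hx, y, hy, rfl⟩
          push_cast at hmN
          exact S_mul α (ih i (by omega) (by omega) hx) (ih j (by omega) (by omega) hy)
        obtain ⟨q, hq1, hq2⟩ := S_kill hdS
        refine hq1 _ ?_
        set z := aeval (R := ℚ) (A := Module.End ℚ A.carrier) α.toLinearMap q (g x) with hz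
        have hzm : z ∈ A.grading m := aeval_mem (fun x hx => h1 m x hx) q hgx
        have hzd : A.d z = 0 := by
          rw [hz, aeval_comm (T := A.d) h2, hq2]
        obtain ⟨w, rfl⟩ : ∃ w : ℕ, m = (w + 1 : ℕ) := ⟨(m - 1).toNat, by omega⟩
        refine S_step (w := w) ?_
        have hex : α z - ((2 : ℚ) ^ (w + 1)) • z ∈ LinearMap.range A.d := by
          refine hφ.1 _ ?_ ⟨0, ?_⟩
          · rw [map_sub, map_smul, h2, hzd]; simp
          · have := h3 _ z hzm
            rw [zpow_natCast] at this
            rw [map_sub, this, map_smul, sub_self, map_zero]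
        have hmem : α z - ((2 : ℚ) ^ (w + 1)) • z ∈ A.grading (w + 1 : ℤ) := by
          have := Submodule.sub_mem _ (h1 _ _ hzm) (Submodule.smul_mem _ ((2 : ℚ) ^ (w + 1)) hzm)
          simpa using this
        obtain ⟨u, hu, hud⟩ := exact_hom A hmem hex
        have hu' := ih (w : ℤ) (by omega) (by omega) hu
        have := S_stable (T := A.d) h2 hu'
        rw [hud] at this
        exact this
  exact key n.toNat n hn (by omega)

/-- Degreewise surjectivity implies freeness of the new generators. -/
theorem Gens.of_span (G : Gens A l deg g) {g' : ι → A.carrier} (hm : ∀ x, g' x ∈ A.grading (deg x))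
    (hs : ∀ n, 0 < n → A.grading n ≤ dec A n ⊔ Submodule.span ℚ (g' '' {x | deg x = n})) :
    Gens A l deg g' := by
  obtain ⟨β, hβ⟩ := G.exists_hom g' (fun x y => A.gcomm (hm x) (hm y))
  have hβm : ∀ n, ∀ a ∈ A.grading n, β a ∈ A.grading n :=
    G.hom_mem A.one_mem A.mul_mem (fun x => by rw [hβ]; exact hm x)
  have hr : ∀ N : ℕ, ∀ n : ℤ, n ≤ N → A.grading n ≤ LinearMap.range β.toLinearMap := by
    intro N
    induction N with
    | zero =>
      intro n hn
      refine (G.grading_le n).trans (Submodule.span_le.2 ?_)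
      rintro _ ⟨e, he, rfl⟩
      change wt deg e.1 = n at he
      have := wt_eq_zero G.deg_ge e.1 (by rw [he]; push_cast at hn; omega)
      refine ⟨1, ?_⟩
      simp [this, mon]
    | succ N ih =>
      intro n hn
      by_cases h0 : n ≤ N
      · exact ih n h0
      refine (hs n (by omega)).trans (sup_le ?_ ?_)
      · unfold dec
        rw [Submodule.span_le]
        rintro z ⟨i, j, hi, hj, hij, x, hx, y, hy, rfl⟩
        push_cast at hn
        obtain ⟨x', rfl⟩ := ih i (by omega) hx
        obtain ⟨y', rfl⟩ := ih j (by omega) hy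
        exact ⟨x' * y', by simp⟩
      · rw [Submodule.span_le]
        rintro _ ⟨x, hx, rfl⟩
        exact ⟨g x, hβ x⟩
  have hr' : ∀ n, A.grading n ≤ LinearMap.range β.toLinearMap := fun n => hr n.toNat n (by omega)
  have hcomm : ∀ n x, β (proj A.internal n x) = proj A.internal n (β x) := by
    intro n x
    have := proj_comm A.internal A.internal β.toLinearMap 0
      (fun n y hy => by simpa using hβm n y hy) n x
    simpa using this
  have hsurj : Function.Surjective β := by
    intro y
    have : y ∈ LinearMap.range β.toLinearMap :=
      mem_of_proj A.internal (fun n => hr' n (proj_mem _ _ _))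
    exact this
  have hinj : Function.Injective β := by
    rw [injective_iff_map_eq_zero]
    intro a ha
    refine eq_zero_of_proj A.internal fun n => ?_
    have := G.findim n
    let βn : A.grading n →ₗ[ℚ] A.grading n := β.toLinearMap.restrict (hβm n)
    have hsn : Function.Surjective βn := by
      rintro ⟨y, hy⟩
      obtain ⟨x, hx⟩ := hsurj y
      refine ⟨⟨proj A.internal n x, proj_mem _ _ _⟩, Subtype.ext ?_⟩
      change β (proj A.internal n x) = y
      rw [hcomm, hx, proj_same _ hy]
    have hin := LinearMap.injective_iff_surjective.2 hsn
    have h0 : βn ⟨proj A.internal n a, proj_mem _ _ _⟩ = 0 := by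
      refine Subtype.ext ?_
      change β (proj A.internal n a) = 0
      rw [hcomm, ha, map_zero]
    have := hin (h0.trans (map_zero βn).symm)
    exact congrArg Subtype.val this
  have hmon : (fun e : Adm deg => mon l g' e.1) = β.toLinearMap ∘ (fun e : Adm deg => mon l g e.1) := by
    funext e
    simp only [Function.comp_apply, AlgHom.toLinearMap_apply, map_mon, hβ]
  refine ⟨G.nodup, G.full, G.deg_ge, hm, ?_, ?_⟩
  · rw [hmon]
    exact G.li.map' _ (LinearMap.ker_eq_bot.2 hinj)
  · rw [hmon, Set.range_comp, ← Submodule.map_span]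
    intro y _
    obtain ⟨x, rfl⟩ := hsurj y
    exact ⟨x, G.sp trivial, rfl⟩

theorem Gens.exists_weights (G : Gens A l deg g) (hdec : ∀ x, A.d (g x) ∈ A.decomposables)
    {B : CDGA} {φ : CDGAHom A B} (hφ : φ.IsQuasiIso)
    {α : A.carrier →ₐ[ℚ] A.carrier} (h1 : ∀ n, ∀ a ∈ A.grading n, α a ∈ A.grading n)
    (h2 : ∀ a, A.d (α a) = α (A.d a))
    (h3 : ∀ n, ∀ a ∈ A.grading n, φ.toFun (α a) = ((2 : ℚ) ^ n) • φ.toFun a) :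
    ∃ (g' : ι → A.carrier) (w : ι → ℕ), Gens A l deg g' ∧ (∀ x, 1 ≤ w x) ∧
      ∀ x, g' x ∈ E α.toLinearMap (w x) := by
  have hspan : ∀ n : ℤ, 0 < n → A.grading n ≤
      Submodule.span ℚ {t | t ∈ A.grading n ∧ ∃ w : ℕ, t ∈ E α.toLinearMap (w + 1)} := by
    intro n hn x hx
    have hxS := G.grading_le_S hdec hφ h1 h2 h3 n hn hx
    have hle : S α.toLinearMap ≤ (Submodule.span ℚ
        {t | t ∈ A.grading n ∧ ∃ w : ℕ, t ∈ E α.toLinearMap (w + 1)}).comap (proj A.internal n) := by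
      refine iSup_le fun w y hy => Submodule.subset_span ⟨proj_mem _ _ _, w, ?_⟩
      refine E_stable (fun x => ?_) hy
      have := proj_comm A.internal A.internal α.toLinearMap 0
        (fun n y hy => by simpa using h1 n y hy) n x
      simpa using this.symm
    have := hle hxS
    rw [Submodule.mem_comap, proj_same _ hx] at this
    exact this
  have hch : ∀ n : ℤ, ∃ g' : {x // deg x = n} → A.carrier,
      (∀ i, g' i ∈ A.grading n ∧ ∃ w : ℕ, g' i ∈ E α.toLinearMap (w + 1)) ∧
      (0 < n → A.grading n ≤ dec A n ⊔ Submodule.span ℚ (Set.range g')) := by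
    intro n
    by_cases hn : 0 < n
    · obtain ⟨g', ha, hb⟩ := choose_gens (I := {x // deg x = n}) (D := dec A n) (W := A.grading n)
        (g := fun x => g x.1) (T := {t | t ∈ A.grading n ∧ ∃ w : ℕ, t ∈ E α.toLinearMap (w + 1)})
        ⟨Submodule.zero_mem _, 0, Submodule.zero_mem _⟩ (fun t ht => ht.1) (hspan n hn) (by
          have := G.grading_le_dec hn
          have e : (Set.range fun x : {x // deg x = n} => g x.1) = g '' {x | deg x = n} := by
            ext y
            constructor
            · rintro ⟨⟨x, hx⟩, rfl⟩; exact ⟨x, hx, rfl⟩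
            · rintro ⟨x, hx, rfl⟩; exact ⟨⟨x, hx⟩, rfl⟩
          rw [e]
          exact this)
      exact ⟨g', ha, fun _ => hb⟩
    · exact ⟨0, fun _ => ⟨Submodule.zero_mem _, 0, Submodule.zero_mem _⟩, fun h => absurd h hn⟩
  choose G' hG1 hG2 using hch
  have hE : ∀ x, ∃ w : ℕ, G' (deg x) ⟨x, rfl⟩ ∈ E α.toLinearMap (w + 1) := fun x => (hG1 _ _).2
  choose w hw using hE
  refine ⟨fun x => G' (deg x) ⟨x, rfl⟩, fun x => w x + 1, G.of_span (fun x => (hG1 _ _).1) ?_,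
    fun x => Nat.le_add_left 1 (w x), hw⟩
  intro n hn
  refine (hG2 n hn).trans (sup_le_sup_left (Submodule.span_mono ?_) _)
  rintro _ ⟨⟨x, rfl⟩, rfl⟩
  exact ⟨x, rfl, rfl⟩

end

end TRC

set_option linter.unusedSectionVars false
set_option linter.deprecated false
set_option linter.unusedSimpArgs false

namespace TRC

open Module

/-! ### Euler characteristics of the weight pieces -/

section Lin

variable {M N : Type} [AddCommGroup M] [Module ℚ M] [AddCommGroup N] [Module ℚ N]

theorem rank_null (f : M →ₗ[ℚ] N) (P : Submodule ℚ M) [FiniteDimensional ℚ P] :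
    finrank ℚ (P.map f) + finrank ℚ (P ⊓ LinearMap.ker f : Submodule ℚ M) = finrank ℚ P := by
  have h := LinearMap.finrank_range_add_finrank_ker (f.domRestrict P)
  have h1 : LinearMap.range (f.domRestrict P) = P.map f := by
    rw [LinearMap.range_domRestrict]
  have h2 : (LinearMap.ker (f.domRestrict P)).map P.subtype = P ⊓ LinearMap.ker f := by
    ext x
    constructor
    · rintro ⟨y, hy, rfl⟩
      exact ⟨y.2, hy⟩
    · rintro ⟨hx, hf⟩
      exact ⟨⟨x, hx⟩, hf, rfl⟩
  rw [← h, h1, ← h2, Submodule.finrank_map_subtype_eq]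

/-- Restriction of an element to a set of basis vectors. -/
theorem exists_restrict {κ : Type} (b : Basis κ ℚ M) (P : Set κ) (y : M) :
    ∃ y₁ ∈ Submodule.span ℚ (b '' P), ∃ y₂ ∈ Submodule.span ℚ (b '' Pᶜ), y = y₁ + y₂ := by
  have : y ∈ Submodule.span ℚ (b '' P) ⊔ Submodule.span ℚ (b '' Pᶜ) := by
    rw [← Submodule.span_union, ← Set.image_union, Set.union_compl_self, Set.image_univ, b.span_eq]
    trivial
  obtain ⟨y₁, h1, y₂, h2, h⟩ := Submodule.mem_sup.1 this
  exact ⟨y₁, h1, y₂, h2, h.symm⟩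

theorem span_disj {κ : Type} (b : Basis κ ℚ M) (P : Set κ) {y : M}
    (h1 : y ∈ Submodule.span ℚ (b '' P)) (h2 : y ∈ Submodule.span ℚ (b '' Pᶜ)) : y = 0 := by
  have := b.linearIndependent.disjoint_span_image (s := P) (t := Pᶜ) disjoint_compl_right
  exact Submodule.disjoint_def.1 this y h1 h2

theorem restrict_d {κ : Type} (b : Basis κ ℚ M) (d : M →ₗ[ℚ] M) {P O : Set κ}
    (h1 : ∀ e ∈ P, d (b e) ∈ Submodule.span ℚ (b '' O))
    (h2 : ∀ e ∉ P, d (b e) ∈ Submodule.span ℚ (b '' Oᶜ)) {y : M}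
    (hy : d y ∈ Submodule.span ℚ (b '' O)) :
    ∃ y₁ ∈ Submodule.span ℚ (b '' P), ∃ y₂ ∈ Submodule.span ℚ (b '' Pᶜ), y = y₁ + y₂ ∧
      d y₁ = d y := by
  obtain ⟨y₁, hy1, y₂, hy2, rfl⟩ := exists_restrict b P y
  refine ⟨y₁, hy1, y₂, hy2, rfl, ?_⟩
  have e1 : d y₁ ∈ Submodule.span ℚ (b '' O) := by
    have : Submodule.span ℚ (b '' P) ≤ (Submodule.span ℚ (b '' O)).comap d := by
      rw [Submodule.span_le]
      rintro _ ⟨e, he, rfl⟩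
      exact h1 e he
    exact this hy1
  have e2 : d y₂ ∈ Submodule.span ℚ (b '' Oᶜ) := by
    have : Submodule.span ℚ (b '' Pᶜ) ≤ (Submodule.span ℚ (b '' Oᶜ)).comap d := by
      rw [Submodule.span_le]
      rintro _ ⟨e, he, rfl⟩
      exact h2 e he
    exact this hy2
  have e3 : d y₂ ∈ Submodule.span ℚ (b '' O) := by
    have := Submodule.sub_mem _ hy e1
    rwa [map_add, add_sub_cancel_left] at this
  rw [map_add, span_disj b O e3 e2, add_zero]

theorem finrank_span_basis {κ : Type} (b : Basis κ ℚ M) (P : Finset κ) :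
    finrank ℚ (Submodule.span ℚ (b '' (P : Set κ))) = P.card := by
  classical
  have := finrank_span_finset_eq_card (R := ℚ) (s := P.image b) (by
    have h := b.linearIndependent.comp (fun x : P => x.1) Subtype.val_injective
    have h2 := h.linearIndepOn_id
    convert h2 using 1
    ext x
    simp)
  rw [Finset.coe_image] at this
  rw [this, Finset.card_image_of_injective _ b.injective]

end Lin

section Count

variable {ι : Type} [Fintype ι] [DecidableEq ι] {deg : ι → ℤ}

/-- The weight of an exponent. -/
def Wt (w : ι → ℕ) (e : ι → ℕ) : ℕ := ∑ x, e x * w x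

theorem finite_Wt {w : ι → ℕ} (hw : ∀ x, 1 ≤ w x) (v : ℕ) :
    {e : Adm deg | Wt w e.1 = v}.Finite := by
  have : {e : ι → ℕ | Wt w e = v}.Finite := by
    refine (Set.finite_Iic (fun _ : ι => v)).subset ?_
    intro e he x
    change Wt w e = v at he
    rw [← he]
    calc e x ≤ e x * w x := Nat.le_mul_of_pos_right _ (hw x)
      _ ≤ _ := Finset.single_le_sum (f := fun x => e x * w x) (fun _ _ => Nat.zero_le _)
        (Finset.mem_univ x)
  exact this.preimage (Subtype.val_injective.injOn)

/-- The exponents of weight `v`. -/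
noncomputable def FW (deg : ι → ℤ) {w : ι → ℕ} (hw : ∀ x, 1 ≤ w x) (v : ℕ) : Finset (Adm deg) :=
  (finite_Wt (deg := deg) hw v).toFinset

theorem mem_FW {w : ι → ℕ} {hw : ∀ x, 1 ≤ w x} {v : ℕ} {e : Adm deg} :
    e ∈ FW deg hw v ↔ Wt w e.1 = v := by
  simp [FW]

end Count

section Euler

variable {A : CDGA} {ι : Type} [Fintype ι] [DecidableEq ι] {l : List ι}
    {deg : ι → ℤ} {g : ι → A.carrier}

open Classical in
theorem Gens.euler (G : Gens A l deg g)
    {B : CDGA} {φ : CDGAHom A B} (hB : B.d = 0) (hφ : φ.IsQuasiIso)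
    {α : A.carrier →ₐ[ℚ] A.carrier}
    (h2 : ∀ a, A.d (α a) = α (A.d a))
    (h3 : ∀ n, ∀ a ∈ A.grading n, φ.toFun (α a) = ((2 : ℚ) ^ n) • φ.toFun a)
    (h1 : ∀ n, ∀ a ∈ A.grading n, α a ∈ A.grading n)
    {w : ι → ℕ} (hw : ∀ x, 1 ≤ w x) (hgw : ∀ x, g x ∈ E α.toLinearMap (w x)) (v : ℕ) :
    ((FW deg hw v).filter (fun e => Even (wt deg e.1 + v))).card =
      ((FW deg hw v).filter (fun e => ¬ Even (wt deg e.1 + v))).card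
        + finrank ℚ (B.grading v) := by
  have hBd : ∀ b, B.d b = 0 := fun b => by rw [hB]; rfl
  have hφd : ∀ a, φ.toFun (A.d a) = 0 := fun a => by rw [φ.comm_d, hBd]
  let b : Basis (Adm deg) ℚ A.carrier := Basis.mk G.li G.sp
  have hb : ∀ e, b e = mon l g e.1 := fun e => by simp [b]
  have hbn : ∀ e, b e ∈ A.grading (wt deg e.1) := fun e => by rw [hb]; exact G.mon_mem e.1
  have hbE : ∀ e, b e ∈ E α.toLinearMap (Wt w e.1) := by
    intro e
    rw [hb]
    have key : ∀ l' : List ι, mon l' g e.1 ∈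
        E α.toLinearMap ((l'.map (fun x => e.1 x * w x)).sum) := by
      intro l'
      induction l' with
      | nil => simpa [mon] using E_one α
      | cons x l' ih =>
        have hp : ∀ k : ℕ, g x ^ k ∈ E α.toLinearMap (k * w x) := by
          intro k
          induction k with
          | zero => simpa using E_one α
          | succ k ih =>
            rw [pow_succ, add_mul, one_mul]
            exact E_mul α ih (hgw x)
        simp only [mon, List.map_cons, List.prod_cons, List.sum_cons]
        exact E_mul α (hp _) ih
    have := key l
    have hs : (l.map (fun x => e.1 x * w x)).sum = Wt w e.1 := by
      have := list_sum_eq G.nodup G.full (fun x => ((e.1 x * w x : ℕ) : ℤ))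
      unfold Wt
      have h2 : (((l.map (fun x => e.1 x * w x)).sum : ℕ) : ℤ) = ((∑ x, e.1 x * w x : ℕ) : ℤ) := by
        rw [Nat.cast_list_sum, List.map_map, Nat.cast_sum, ← this]
        rfl
      exact_mod_cast h2
    rwa [hs] at this
  -- supports of bihomogeneous elements
  have hsE : ∀ u, E α.toLinearMap u ≤ Submodule.span ℚ (b '' {e | Wt w e.1 = u}) := by
    intro u x hx
    obtain ⟨y, hy, z, hz, rfl⟩ := exists_restrict b {e | Wt w e.1 = u} x
    have hyE : y ∈ E α.toLinearMap u := by
      refine (Submodule.span_le.2 ?_) hy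
      rintro _ ⟨e, he, rfl⟩
      have := hbE e
      rw [show Wt w e.1 = u from he] at this
      exact this
    have hzE : z ∈ E α.toLinearMap u := by
      have := Submodule.sub_mem _ hx hyE
      rwa [add_sub_cancel_left] at this
    have hind := (Module.End.independent_maxGenEigenspace (α.toLinearMap : Module.End ℚ A.carrier)).comp
      (f := fun n : ℕ => (2 : ℚ) ^ n) (pow_right_injective₀ (by norm_num) (by norm_num))
    have hz' : z ∈ ⨆ (j : ℕ) (_ : j ≠ u), E α.toLinearMap j := by
      refine (Submodule.span_le.2 ?_) hz
      rintro _ ⟨e, he, rfl⟩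
      exact (le_iSup₂ (f := fun (j : ℕ) (_ : j ≠ u) => E α.toLinearMap j) (Wt w e.1) he) (hbE e)
    have h0 := Submodule.disjoint_def.1 (hind u) z hzE hz'
    rw [h0, add_zero]
    exact hy
  have hsN : ∀ n, A.grading n ≤ Submodule.span ℚ (b '' {e | wt deg e.1 = n}) := by
    intro n
    have := G.grading_le n
    have e : b '' {e | wt deg e.1 = n} = (fun e : Adm deg => mon l g e.1) '' {e | wt deg e.1 = n} :=
      Set.image_congr (fun e _ => hb e)
    rwa [e]
  have hsEN : ∀ u n x, x ∈ E α.toLinearMap u → x ∈ A.grading n →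
      x ∈ Submodule.span ℚ (b '' {e | Wt w e.1 = u ∧ wt deg e.1 = n}) := by
    intro u n x hx hn
    have e1 := b.mem_span_image.1 (hsE u hx)
    have e2 := b.mem_span_image.1 (hsN n hn)
    exact b.mem_span_image.2 (fun e he => ⟨e1 he, e2 he⟩)
  have hdb : ∀ e, A.d (b e) ∈
      Submodule.span ℚ (b '' {e' | Wt w e'.1 = Wt w e.1 ∧ wt deg e'.1 = wt deg e.1 + 1}) :=
    fun e => hsEN _ _ _ (E_stable (T := A.d) h2 (hbE e)) (A.d_mem (hbn e))
  have hφb : ∀ e, (Wt w e.1 : ℤ) ≠ wt deg e.1 → φ.toFun (b e) = 0 := by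
    intro e he
    obtain ⟨k, hk⟩ := mem_E.1 (hbE e)
    have : ∀ (k : ℕ) (x : A.carrier), x ∈ A.grading (wt deg e.1) →
        φ.toFun (((α.toLinearMap - ((2 : ℚ) ^ (Wt w e.1)) • (1 : Module.End ℚ A.carrier)) ^ k) x) =
        ((2 : ℚ) ^ (wt deg e.1) - 2 ^ (Wt w e.1)) ^ k • φ.toFun x := by
      intro k
      induction k with
      | zero => intro x _; simp
      | succ k ih =>
        intro x hx
        have e1 : (α.toLinearMap - ((2 : ℚ) ^ (Wt w e.1)) • (1 : Module.End ℚ A.carrier)) x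
            = α x - ((2 : ℚ) ^ (Wt w e.1)) • x := rfl
        rw [pow_succ, Module.End.mul_apply, e1,
          ih _ (Submodule.sub_mem _ (h1 _ _ hx) (Submodule.smul_mem _ _ hx)), map_sub, map_smul,
          h3 _ _ hx, ← sub_smul, smul_smul, pow_succ]
    have h4 := this k (b e) (hbn e)
    rw [hk, map_zero] at h4
    have hne : ((2 : ℚ) ^ (wt deg e.1) - 2 ^ (Wt w e.1)) ^ k ≠ 0 := by
      refine pow_ne_zero _ (sub_ne_zero.2 ?_)
      intro h
      rw [← zpow_natCast] at h
      exact he (zpow_right_injective₀ (by norm_num) (by norm_num) h).symm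
    exact (smul_eq_zero.1 h4.symm).resolve_left hne
  set P : Finset (Adm deg) := (FW deg hw v).filter (fun e => Even (wt deg e.1 + v)) with hP
  set O : Finset (Adm deg) := (FW deg hw v).filter (fun e => ¬ Even (wt deg e.1 + v)) with hO
  have mP : ∀ e, e ∈ P ↔ Wt w e.1 = v ∧ Even (wt deg e.1 + v) := by
    intro e; rw [hP, Finset.mem_filter, mem_FW]
  have mO : ∀ e, e ∈ O ↔ Wt w e.1 = v ∧ ¬ Even (wt deg e.1 + v) := by
    intro e; rw [hO, Finset.mem_filter, mem_FW]
  have par : ∀ n : ℤ, Even (n + 1 + v) ↔ ¬ Even (n + v) := by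
    intro n
    rw [show n + 1 + v = n + v + 1 by ring, Int.even_add_one]
  have dPO : ∀ e ∈ (P : Set (Adm deg)), A.d (b e) ∈ Submodule.span ℚ (b '' (O : Set (Adm deg))) := by
    intro e he
    rw [Finset.mem_coe, mP] at he
    refine Submodule.span_mono (Set.image_mono ?_) (hdb e)
    rintro e' ⟨q1, q2⟩
    rw [Finset.mem_coe, mO, q1, q2, par]
    exact ⟨he.1, not_not.2 he.2⟩
  have dPO' : ∀ e ∉ (P : Set (Adm deg)),
      A.d (b e) ∈ Submodule.span ℚ (b '' (O : Set (Adm deg))ᶜ) := by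
    intro e he
    rw [Finset.mem_coe, mP] at he
    refine Submodule.span_mono (Set.image_mono ?_) (hdb e)
    rintro e' ⟨q1, q2⟩
    rw [Set.mem_compl_iff, Finset.mem_coe, mO, q1, q2, par]
    rwa [not_not]
  have dOP : ∀ e ∈ (O : Set (Adm deg)), A.d (b e) ∈ Submodule.span ℚ (b '' (P : Set (Adm deg))) := by
    intro e he
    rw [Finset.mem_coe, mO] at he
    refine Submodule.span_mono (Set.image_mono ?_) (hdb e)
    rintro e' ⟨q1, q2⟩
    rw [Finset.mem_coe, mP, q1, q2, par]
    exact he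
  have dOP' : ∀ e ∉ (O : Set (Adm deg)),
      A.d (b e) ∈ Submodule.span ℚ (b '' (P : Set (Adm deg))ᶜ) := by
    intro e he
    rw [Finset.mem_coe, mO] at he
    refine Submodule.span_mono (Set.image_mono ?_) (hdb e)
    rintro e' ⟨q1, q2⟩
    rw [Set.mem_compl_iff, Finset.mem_coe, mP, q1, q2, par]
    exact he
  set SP := Submodule.span ℚ (b '' (P : Set (Adm deg))) with hSP
  set SO := Submodule.span ℚ (b '' (O : Set (Adm deg))) with hSO
  have fSP : FiniteDimensional ℚ SP := FiniteDimensional.span_of_finite ℚ (P.finite_toSet.image b)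
  have fSO : FiniteDimensional ℚ SO := FiniteDimensional.span_of_finite ℚ (O.finite_toSet.image b)
  have mapPO : ∀ x ∈ SP, A.d x ∈ SO := by
    have : SP ≤ SO.comap A.d := Submodule.span_le.2 (by rintro _ ⟨e, he, rfl⟩; exact dPO e he)
    exact this
  have mapOP : ∀ x ∈ SO, A.d x ∈ SP := by
    have : SO ≤ SP.comap A.d := Submodule.span_le.2 (by rintro _ ⟨e, he, rfl⟩; exact dOP e he)
    exact this
  have φO : ∀ x ∈ SO, φ.toFun x = 0 := by
    have : SO ≤ LinearMap.ker φ.toFun.toLinearMap := Submodule.span_le.2 (by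
      rintro _ ⟨e, he, rfl⟩
      rw [Finset.mem_coe, mO] at he
      refine hφb e ?_
      intro h
      refine he.2 ?_
      rw [← h, he.1]
      exact ⟨v, rfl⟩)
    exact this
  have φP : ∀ x ∈ SP, φ.toFun x ∈ B.grading v := by
    have : SP ≤ (B.grading v).comap φ.toFun.toLinearMap := Submodule.span_le.2 (by
      rintro _ ⟨e, he, rfl⟩
      rw [Finset.mem_coe, mP] at he
      change φ.toFun (b e) ∈ B.grading v
      by_cases h : (Wt w e.1 : ℤ) = wt deg e.1
      · have := φ.map_grading _ _ (hbn e)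
        rwa [← h, he.1] at this
      · rw [hφb e h]; exact Submodule.zero_mem _)
    exact this
  have φP' : ∀ x ∈ Submodule.span ℚ (b '' (P : Set (Adm deg))ᶜ),
      proj B.internal v (φ.toFun x) = 0 := by
    have : Submodule.span ℚ (b '' (P : Set (Adm deg))ᶜ) ≤
        LinearMap.ker (proj B.internal v ∘ₗ φ.toFun.toLinearMap) := Submodule.span_le.2 (by
      rintro _ ⟨e, he, rfl⟩
      rw [Set.mem_compl_iff, Finset.mem_coe, mP] at he
      change proj B.internal v (φ.toFun (b e)) = 0
      by_cases h : (Wt w e.1 : ℤ) = wt deg e.1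
      · refine proj_ne B.internal (φ.map_grading _ _ (hbn e)) ?_
        intro h'
        refine he ⟨?_, ?_⟩
        · rw [h'] at h; exact_mod_cast h
        · rw [h']; exact ⟨v, rfl⟩
      · rw [hφb e h, map_zero])
    exact this
  have r1 := rank_null A.d SP
  have r2 := rank_null A.d SO
  have r3 := rank_null φ.toFun.toLinearMap (SP ⊓ LinearMap.ker A.d)
  have i1 : SO ⊓ LinearMap.ker A.d = SP.map A.d := by
    ext z
    constructor
    · rintro ⟨hz, hdz⟩
      obtain ⟨y, rfl⟩ := hφ.1 z hdz ⟨0, by rw [φO z hz, map_zero]⟩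
      obtain ⟨y1, hy1, -, -, -, he⟩ := restrict_d b A.d dPO dPO' hz
      exact ⟨y1, hy1, he⟩
    · rintro ⟨y, hy, rfl⟩
      exact ⟨mapPO y hy, A.d_sq y⟩
  have i2 : (SP ⊓ LinearMap.ker A.d).map φ.toFun.toLinearMap = B.grading v := by
    ext z
    constructor
    · rintro ⟨y, ⟨hy, -⟩, rfl⟩
      exact φP y hy
    · intro hz
      obtain ⟨a, ha, c, hc⟩ := hφ.2 z (hBd z)
      rw [hBd] at hc
      have hc' : φ.toFun a = z := (sub_eq_zero.1 hc.symm)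
      obtain ⟨y1, hy1, y2, hy2, rfl, he⟩ := restrict_d b A.d dPO dPO' (y := a)
        (by rw [ha]; exact Submodule.zero_mem _)
      refine ⟨y1, ⟨hy1, he.trans ha⟩, ?_⟩
      have h5 := congrArg (proj B.internal v) hc'
      rw [map_add, map_add, φP' y2 hy2, add_zero, proj_same _ hz, proj_same _ (φP y1 hy1)] at h5
      exact h5
  have i3 : (SP ⊓ LinearMap.ker A.d) ⊓ LinearMap.ker φ.toFun.toLinearMap = SO.map A.d := by
    ext z
    constructor
    · rintro ⟨⟨hz, hdz⟩, hφz⟩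
      obtain ⟨y, rfl⟩ := hφ.1 z hdz ⟨0, by rw [map_zero]; exact hφz.symm⟩
      obtain ⟨y1, hy1, -, -, -, he⟩ := restrict_d b A.d dOP dOP' hz
      exact ⟨y1, hy1, he⟩
    · rintro ⟨y, hy, rfl⟩
      exact ⟨⟨mapOP y hy, A.d_sq y⟩, hφd y⟩
  have c1 : finrank ℚ SP = P.card := finrank_span_basis b P
  have c2 : finrank ℚ SO = O.card := finrank_span_basis b O
  rw [i2, i3] at r3
  rw [i1] at r2
  omega

end Euler

end TRC

set_option linter.unusedSectionVars false
set_option linter.deprecated false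
set_option linter.unusedSimpArgs false

namespace TRC

/-! ### The generating function -/

section Gen

variable {ι : Type} [Fintype ι] [DecidableEq ι] {deg : ι → ℤ}

open Classical in
/-- The generating function of the powers of a single generator. -/
noncomputable def ps (odd : Prop) (w : ℕ) : PowerSeries ℤ :=
  PowerSeries.mk fun m => if odd then (if m = 0 then 1 else if m = w then -1 else 0)
    else (if w ∣ m then 1 else 0)

theorem ps_odd {odd : Prop} (h : odd) {w : ℕ} (hw : 1 ≤ w) :
    ps odd w = 1 - (PowerSeries.X : PowerSeries ℤ) ^ w := by
  ext m
  simp only [ps, PowerSeries.coeff_mk, if_pos h, map_sub, PowerSeries.coeff_one,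
    PowerSeries.coeff_X_pow]
  split_ifs <;> first | omega | simp

theorem ps_even {odd : Prop} (h : ¬ odd) {w : ℕ} (hw : 1 ≤ w) :
    ps odd w * (1 - (PowerSeries.X : PowerSeries ℤ) ^ w) = 1 := by
  ext m
  simp only [mul_sub, mul_one, map_sub, PowerSeries.coeff_mul_X_pow', PowerSeries.coeff_one]
  simp only [ps, PowerSeries.coeff_mk, if_neg h]
  by_cases hm : w ≤ m
  · have : w ∣ m - w ↔ w ∣ m := by
      rw [Nat.dvd_sub_iff_left hm dvd_rfl]
    simp only [hm, if_true, this, sub_self]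
    rw [if_neg (by omega)]
  · rw [if_neg hm, sub_zero]
    by_cases h0 : m = 0
    · simp [h0]
    · rw [if_neg h0, if_neg]
      exact fun hd => hm (Nat.le_of_dvd (by omega) hd)

theorem coeff_ps {odd : Prop} {w : ℕ} (hw : 1 ≤ w) {k : ℕ} (hk : odd → k ≤ 1) [Decidable odd] :
    PowerSeries.coeff (k * w) (ps odd w) = (if odd then -1 else 1) ^ k := by
  simp only [ps, PowerSeries.coeff_mk]
  by_cases h : odd
  · have := hk h
    simp only [if_pos h]
    interval_cases k
    · simp
    · simp; omega
  · simp [h]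

theorem coeff_ps_ne {odd : Prop} {w : ℕ} (hw : 1 ≤ w) {m : ℕ}
    (h : PowerSeries.coeff m (ps odd w) ≠ 0) : ∃ k : ℕ, (odd → k ≤ 1) ∧ k * w = m := by
  simp only [ps, PowerSeries.coeff_mk] at h
  by_cases ho : odd
  · simp only [if_pos ho] at h
    split_ifs at h with h1 h2
    · exact ⟨0, fun _ => by omega, by omega⟩
    · exact ⟨1, fun _ => le_rfl, by omega⟩
    · exact absurd rfl h
  · simp only [if_neg ho] at h
    split_ifs at h with h1
    · obtain ⟨k, rfl⟩ := h1
      exact ⟨k, fun h => absurd h ho, mul_comm _ _⟩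
    · exact absurd rfl h

theorem sign_prod (e : ι → ℕ) :
    ∏ x, (if Odd (deg x) then (-1 : ℤ) else 1) ^ e x = if Even (wt deg e) then 1 else -1 := by
  classical
  unfold wt
  induction (Finset.univ : Finset ι) using Finset.induction_on with
  | empty => simp
  | insert x s hx ih =>
    rw [Finset.prod_insert hx, Finset.sum_insert hx, ih]
    by_cases h : Odd (deg x)
    · simp only [if_pos h]
      rcases Nat.even_or_odd (e x) with he | he
      · have : Even ((e x : ℤ) * deg x) := ((Int.even_coe_nat _).2 he).mul_right _
        rw [he.neg_one_pow, one_mul]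
        simp [Int.even_add, this]
      · have : ¬ Even ((e x : ℤ) * deg x) := by
          rw [Int.not_even_iff_odd]
          exact Odd.mul (by exact_mod_cast he) h
        rw [he.neg_one_pow]
        simp only [Int.even_add, this, false_iff]
        split_ifs <;> simp_all
    · have : Even ((e x : ℤ) * deg x) := (Int.not_odd_iff_even.1 h).mul_left _
      simp [h, Int.even_add, this]

theorem coeff_prod_ps {w : ι → ℕ} (hw : ∀ x, 1 ≤ w x) (v : ℕ) :
    PowerSeries.coeff v (∏ x, ps (Odd (deg x)) (w x)) =
      ∑ e ∈ FW deg hw v, if Even (wt deg e.1) then 1 else -1 := by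
  classical
  rw [PowerSeries.coeff_prod]
  symm
  refine Finset.sum_of_injOn
    (fun e : Adm deg => Finsupp.equivFunOnFinite.symm (fun x => e.1 x * w x)) ?_ ?_ ?_ ?_
  · intro e _ e' _ h
    have h' := Finsupp.equivFunOnFinite.symm.injective h
    refine Subtype.ext (funext fun x => ?_)
    exact Nat.eq_of_mul_eq_mul_right (hw x) (congrFun h' x)
  · intro e he
    rw [Finset.mem_coe, mem_FW] at he
    rw [Finset.mem_coe, Finset.mem_finsuppAntidiag]
    refine ⟨?_, Finset.subset_univ _⟩
    simpa [Wt] using he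
  · intro f hf hne
    by_contra hprod
    rw [← ne_eq, Finset.prod_ne_zero_iff] at hprod
    have : ∀ x, ∃ k : ℕ, (Odd (deg x) → k ≤ 1) ∧ k * w x = f x := fun x =>
      coeff_ps_ne (hw x) (hprod x (Finset.mem_univ x))
    choose k hk1 hk2 using this
    refine hne ⟨(⟨k, hk1⟩ : Adm deg), Finset.mem_coe.2 (mem_FW.2 ?_), ?_⟩
    · rw [Finset.mem_finsuppAntidiag] at hf
      show Wt w k = v
      simp only [Wt, hk2]
      simpa using hf.1
    · ext x
      simp [hk2]
  · intro e _
    rw [← sign_prod]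
    refine Finset.prod_congr rfl fun x _ => ?_
    simp only [Finsupp.equivFunOnFinite_symm_apply_apply]
    rw [coeff_ps (hw x) (e.2 x)]

open Classical in
theorem exists_poly {w : ι → ℕ} (hw : ∀ x, 1 ≤ w x) (h : ℕ → ℕ) (m : ℕ)
    (hm : ∀ v, m ≤ v → h v = 0)
    (hE : ∀ v : ℕ, ((FW deg hw v).filter (fun e => Even (wt deg e.1 + v))).card =
      ((FW deg hw v).filter (fun e => ¬ Even (wt deg e.1 + v))).card + h v) :
    ∃ F : Polynomial ℤ, F.eval (-1) = ∑ v ∈ Finset.range m, (h v : ℤ) ∧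
      F * ∏ x with ¬ Odd (deg x), (1 - Polynomial.X ^ (w x)) =
        ∏ x with Odd (deg x), (1 - Polynomial.X ^ (w x)) := by
  let F : Polynomial ℤ := ∑ v ∈ Finset.range m, Polynomial.monomial v ((-1) ^ v * (h v : ℤ))
  have hF : (F : PowerSeries ℤ) = ∏ x, ps (Odd (deg x)) (w x) := by
    ext v
    rw [coeff_prod_ps hw, Polynomial.coeff_coe]
    have h1 : F.coeff v = (-1) ^ v * (h v : ℤ) := by
      simp only [F, Polynomial.finset_sum_coeff, Polynomial.coeff_monomial]
      rw [Finset.sum_ite_eq' (Finset.range m) v]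
      split_ifs with hv
      · rfl
      · rw [hm v (by simpa using hv)]; simp
    have hE' : (h v : ℤ) =
        (((FW deg hw v).filter (fun e => Even (wt deg e.1 + v))).card : ℤ) -
        (((FW deg hw v).filter (fun e => ¬ Even (wt deg e.1 + v))).card : ℤ) := by
      have := hE v
      omega
    rw [h1, hE', mul_sub, Finset.card_eq_sum_ones, Finset.card_eq_sum_ones, Nat.cast_sum, Nat.cast_sum,
      Finset.mul_sum, Finset.mul_sum,
      ← Finset.sum_filter_add_sum_filter_not (FW deg hw v) (fun e => Even (wt deg e.1 + v)),
      sub_eq_add_neg, ← Finset.sum_neg_distrib]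
    congr 1
    · refine Finset.sum_congr rfl fun e he => ?_
      have he := (Finset.mem_filter.1 he).2
      rcases Nat.even_or_odd v with hv | hv
      · have h2 : Even (v : ℤ) := by exact_mod_cast hv
        have : Even (wt deg e.1) := by
          rw [Int.even_add] at he; exact he.2 h2
        simp [hv.neg_one_pow, this]
      · have h2 : ¬ Even (v : ℤ) := by rw [Int.not_even_iff_odd]; exact_mod_cast hv
        have : ¬ Even (wt deg e.1) := by
          rw [Int.even_add] at he; exact fun h => h2 (he.1 h)
        simp [hv.neg_one_pow, this]
    · refine Finset.sum_congr rfl fun e he => ?_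
      have he := (Finset.mem_filter.1 he).2
      rcases Nat.even_or_odd v with hv | hv
      · have h2 : Even (v : ℤ) := by exact_mod_cast hv
        have : ¬ Even (wt deg e.1) := by
          rw [Int.even_add] at he; exact fun h => he ⟨fun _ => h2, fun _ => h⟩
        simp [hv.neg_one_pow, this]
      · have h2 : ¬ Even (v : ℤ) := by rw [Int.not_even_iff_odd]; exact_mod_cast hv
        have : Even (wt deg e.1) := by
          rw [Int.even_add] at he
          by_contra h
          exact he ⟨fun h' => absurd h' h, fun h' => absurd h' h2⟩
        simp [hv.neg_one_pow, this]
  refine ⟨F, ?_, ?_⟩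
  · simp only [F, Polynomial.eval_finset_sum, Polynomial.eval_monomial]
    refine Finset.sum_congr rfl fun v _ => ?_
    rw [mul_right_comm, ← mul_pow]
    simp
  · apply Polynomial.coe_injective ℤ
    have cp : ∀ s : Finset ι, ((∏ x ∈ s, (1 - Polynomial.X ^ (w x)) : Polynomial ℤ) : PowerSeries ℤ)
        = ∏ x ∈ s, (1 - (PowerSeries.X : PowerSeries ℤ) ^ (w x)) := by
      intro s
      rw [← Polynomial.coeToPowerSeries.ringHom_apply, map_prod]
      refine Finset.prod_congr rfl fun x _ => ?_
      simp
    rw [Polynomial.coe_mul, cp, cp, hF,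
      ← Finset.prod_filter_mul_prod_filter_not Finset.univ (fun x => Odd (deg x)), mul_assoc,
      ← Finset.prod_mul_distrib, Finset.prod_congr rfl (g := fun _ => (1 : PowerSeries ℤ))
      (s₁ := Finset.univ.filter (fun x => ¬ Odd (deg x)))
      (fun x hx => ps_even (Finset.mem_filter.1 hx).2 (hw x))]
    rw [Finset.prod_const_one, mul_one]
    exact Finset.prod_congr rfl (fun x hx => ps_odd (Finset.mem_filter.1 hx).2 (hw x))

end Gen

end TRC

set_option linter.unusedSectionVars false
set_option linter.deprecated false
set_option linter.unusedSimpArgs false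

namespace TRC

/-! ### Arithmetic of the polynomial identity -/

section Arith

open Polynomial

/-- The cyclotomic polynomial of order `2 ^ k`. -/
noncomputable def cy (k : ℕ) : ℤ[X] := cyclotomic (2 ^ k) ℤ

theorem cy_prime (k : ℕ) : Prime (cy k) :=
  (cyclotomic.irreducible (by positivity)).prime

theorem cy_monic (k : ℕ) : (cy k).Monic := cyclotomic.monic _ _

theorem cy_eval (k : ℕ) : (cy k).eval (-1) = if k = 0 then -2 else if k = 1 then 0 else 2 := by
  rcases k with _ | _ | k
  · simp [cy]
  · simp [cy]
  · have : cy (k + 2) = ∑ i ∈ Finset.range 2, (X ^ (2 ^ (k + 1))) ^ i :=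
      cyclotomic_prime_pow_eq_geom_sum Nat.prime_two
    rw [this]
    have h1 : (-1 : ℤ) ^ (2 ^ (k + 1)) = 1 :=
      Even.neg_one_pow ((Nat.even_pow).2 ⟨even_two, by omega⟩)
    simp [Finset.sum_range_succ, h1]

theorem cy_even (k : ℕ) : ¬ Odd ((cy k).eval (-1)) := by
  rw [cy_eval]
  split_ifs <;> decide

theorem cy_not_dvd {k j : ℕ} (h : k ≠ j) : ¬ cy k ∣ cy j := by
  intro hd
  have ha : Associated (cy k) (cy j) := (cy_prime k).associated_of_dvd (cy_prime j) hd
  have := eq_of_monic_of_associated (cy_monic k) (cy_monic j) ha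
  exact h (Nat.pow_right_injective le_rfl (cyclotomic_injective this))

theorem cy_prod (a : ℕ) : ∏ k ∈ Finset.range (a + 1), cy k = X ^ (2 ^ a) - 1 := by
  induction a with
  | zero => simp [cy]
  | succ a ih =>
    rw [Finset.prod_range_succ, ih, mul_comm]
    exact cyclotomic_prime_pow_mul_X_pow_sub_one ℤ 2 a

theorem not_dvd_of_odd {R : ℤ[X]} (h : Odd (R.eval (-1))) (k : ℕ) : ¬ cy k ∣ R := by
  rintro ⟨Q, rfl⟩
  rw [eval_mul, Int.odd_mul] at h
  exact cy_even k h.1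

theorem factor {w K : ℕ} (hw : 1 ≤ w) (hK : w < K) :
    ∃ R : ℤ[X], Odd (R.eval (-1)) ∧
      1 - X ^ w = (∏ k ∈ Finset.range K, if 2 ^ k ∣ w then cy k else 1) * R := by
  obtain ⟨a, u, hu, rfl⟩ := Nat.exists_eq_two_pow_mul_odd (n := w) (by omega)
  refine ⟨-∑ j ∈ Finset.range u, (X ^ (2 ^ a)) ^ j, ?_, ?_⟩
  · rw [eval_neg, odd_neg, eval_finset_sum]
    rcases a with _ | a
    · have : ∑ j ∈ Finset.range u, (-1 : ℤ) ^ j = 1 := by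
        rw [neg_one_geom_sum, if_neg (Nat.not_even_iff_odd.2 hu)]
      simp [this]
    · have h1 : (-1 : ℤ) ^ (2 ^ (a + 1)) = 1 :=
        Even.neg_one_pow ((Nat.even_pow).2 ⟨even_two, by omega⟩)
      simp [h1, hu]
  · have h1 : ∀ k, 2 ^ k ∣ 2 ^ a * u ↔ k ≤ a := by
      intro k
      rw [Nat.Coprime.dvd_mul_right
        (Nat.Coprime.pow_left k ((Nat.coprime_two_left).2 hu))]
      exact Nat.pow_dvd_pow_iff_le_right (by norm_num)
    have h2 : a < K := by
      have : a < 2 ^ a := Nat.lt_two_pow_self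
      have : 2 ^ a ≤ 2 ^ a * u := Nat.le_mul_of_pos_right _ hu.pos
      omega
    rw [← Finset.prod_filter]
    have h3 : (Finset.range K).filter (fun k => 2 ^ k ∣ 2 ^ a * u) = Finset.range (a + 1) := by
      ext k
      simp only [Finset.mem_filter, Finset.mem_range, h1]
      omega
    rw [h3, cy_prod, mul_neg, mul_comm _ (∑ j ∈ Finset.range u, _), geom_sum_mul, pow_mul]
    ring

theorem factor_prod {ι : Type} (s : Finset ι) (w : ι → ℕ) (hw : ∀ x, 1 ≤ w x) (K : ℕ)
    (hK : ∀ x, w x < K) :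
    ∃ R : ℤ[X], Odd (R.eval (-1)) ∧ ∏ x ∈ s, (1 - X ^ w x) =
      (∏ k ∈ Finset.range K, cy k ^ (s.filter fun x => 2 ^ k ∣ w x).card) * R := by
  choose R hR1 hR2 using fun x => factor (hw x) (hK x)
  refine ⟨∏ x ∈ s, R x, ?_, ?_⟩
  · rw [eval_prod]
    refine Finset.prod_induction _ Odd (fun _ _ => Odd.mul) odd_one fun x _ => hR1 x
  · rw [Finset.prod_congr rfl fun x _ => hR2 x, Finset.prod_mul_distrib, Finset.prod_comm]
    congr 1
    refine Finset.prod_congr rfl fun k _ => ?_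
    rw [Finset.prod_ite, Finset.prod_const, Finset.prod_const_one, mul_one]

theorem emult_prod {K k : ℕ} (hk : k < K) (n : ℕ → ℕ) {R : ℤ[X]} (hR : Odd (R.eval (-1))) :
    emultiplicity (cy k) ((∏ j ∈ Finset.range K, cy j ^ n j) * R) = n k := by
  rw [emultiplicity_mul (cy_prime k), emultiplicity_eq_zero.2 (not_dvd_of_odd hR k), add_zero,
    Finset.emultiplicity_prod (cy_prime k), Finset.sum_eq_single k]
  · rw [emultiplicity_pow (cy_prime k)]
    have : emultiplicity (cy k) (cy k) = 1 :=
      (FiniteMultiplicity.of_prime_left (cy_prime k) (cy_prime k).ne_zero).emultiplicity_self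
    rw [this, mul_one]
  · intro j _ hj
    rw [emultiplicity_pow (cy_prime k), emultiplicity_eq_zero.2 (cy_not_dvd hj.symm), mul_zero]
  · intro h
    exact absurd (Finset.mem_range.2 hk) h

theorem arith {ι : Type} (s t : Finset ι) (w : ι → ℕ) (hw : ∀ x, 1 ≤ w x) (K : ℕ)
    (hK : ∀ x, w x < K) (F : ℤ[X]) (hF : F * ∏ x ∈ s, (1 - X ^ w x) = ∏ x ∈ t, (1 - X ^ w x)) :
    (2 : ℤ) ^ (t.card - s.card) ∣ F.eval (-1) := by
  obtain ⟨R, hR, hs⟩ := factor_prod s w hw (K + 1) (fun x => (hK x).trans (Nat.lt_succ_self K))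
  obtain ⟨Q, hQ, ht⟩ := factor_prod t w hw (K + 1) (fun x => (hK x).trans (Nat.lt_succ_self K))
  rw [hs, ht] at hF
  set m := fun k => (s.filter fun x => 2 ^ k ∣ w x).card with hm
  set n := fun k => (t.filter fun x => 2 ^ k ∣ w x).card with hn
  have hle : ∀ k ∈ Finset.range (K + 1), m k ≤ n k := by
    intro k hk
    have hk := Finset.mem_range.1 hk
    have h1 := congrArg (emultiplicity (cy k)) hF
    rw [emultiplicity_mul (cy_prime k), emult_prod hk m hR, emult_prod hk n hQ] at h1
    have : (m k : ℕ∞) ≤ n k := h1 ▸ le_add_self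
    exact_mod_cast this
  have hprod : ∏ k ∈ Finset.range (K + 1), cy k ^ n k =
      (∏ k ∈ Finset.range (K + 1), cy k ^ m k) * ∏ k ∈ Finset.range (K + 1), cy k ^ (n k - m k) := by
    rw [← Finset.prod_mul_distrib]
    refine Finset.prod_congr rfl fun k hk => ?_
    rw [← pow_add, Nat.add_sub_cancel' (hle k hk)]
  have hne : ∏ k ∈ Finset.range (K + 1), cy k ^ m k ≠ 0 :=
    Finset.prod_ne_zero_iff.2 fun k _ => pow_ne_zero _ (cy_prime k).ne_zero
  have h2 : F * R = (∏ k ∈ Finset.range (K + 1), cy k ^ (n k - m k)) * Q := by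
    apply mul_left_cancel₀ hne
    rw [← mul_assoc _ _ Q, ← hprod, ← hF]
    ring
  have h3 := congrArg (eval (-1)) h2
  rw [eval_mul, eval_mul, eval_prod, Finset.prod_range_succ'] at h3
  have h4 : (2 : ℤ) ^ (t.card - s.card) ∣ F.eval (-1) * R.eval (-1) := by
    rw [h3]
    refine Dvd.dvd.mul_right (Dvd.dvd.mul_left ?_ _) _
    have h5 : n 0 - m 0 = t.card - s.card := by simp [hm, hn]
    rw [h5, eval_pow, cy_eval, if_pos rfl]
    exact pow_dvd_pow_of_dvd (by norm_num) _
  refine IsCoprime.dvd_of_dvd_mul_right ?_ h4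
  refine IsCoprime.pow_left ?_
  rw [Int.isCoprime_iff_gcd_eq_one]
  exact Int.isCoprime_iff_gcd_eq_one.1 (Int.isCoprime_two_left.2 hR)

end Arith

end TRC

set_option linter.unusedSectionVars false
set_option linter.deprecated false
set_option linter.unusedSimpArgs false

namespace TRC

/-! ### The inequality for algebras with finitely many free generators -/

section Final

open Module

theorem finrank_H {A B : CDGA} {φ : CDGAHom A B} (hB : B.d = 0) (hφ : φ.IsQuasiIso) :
    Nonempty (A.Hspace ≃ₗ[ℚ] B.carrier) := by
  have hBd : ∀ b, B.d b = 0 := fun b => by rw [hB]; rfl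
  let f : ↥(LinearMap.ker A.d) →ₗ[ℚ] B.carrier :=
    φ.toFun.toLinearMap ∘ₗ (LinearMap.ker A.d).subtype
  have hr : LinearMap.range B.d = ⊥ := by rw [hB]; exact LinearMap.range_zero
  have hs : Function.Surjective f := by
    intro y
    obtain ⟨x, hx, hxy⟩ := hφ.2 y (hBd y)
    rw [hr, Submodule.mem_bot, sub_eq_zero] at hxy
    exact ⟨⟨x, hx⟩, hxy⟩
  have hk : (LinearMap.range A.d).comap (LinearMap.ker A.d).subtype = LinearMap.ker f := by
    ext x
    constructor
    · rintro ⟨y, hy⟩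
      show φ.toFun x.1 = 0
      have hy : A.d y = x.1 := hy
      rw [← hy, φ.comm_d, hBd]
    · intro hx
      have hx : φ.toFun x.1 = 0 := hx
      exact hφ.1 x.1 x.2 (by rw [hx]; exact Submodule.zero_mem _)
  exact ⟨(Submodule.quotEquivOfEq _ _ hk).trans (f.quotKerEquivOfSurjective hs)⟩

theorem sum_finrank_le (B : CDGA) [FiniteDimensional ℚ B.carrier] (m : ℕ) :
    ∑ v ∈ Finset.range m, finrank ℚ (B.grading v) ≤ finrank ℚ B.carrier := by
  classical
  have hi : iSupIndep (fun v : Fin m => B.grading ((v : ℕ) : ℤ)) :=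
    B.internal.submodule_iSupIndep.comp (f := fun v : Fin m => ((v : ℕ) : ℤ))
      (fun a b h => Fin.ext (Nat.cast_injective (R := ℤ) h))
  have hinj := hi.dfinsupp_lsum_injective
  have := LinearMap.finrank_le_finrank_of_injective hinj
  have h2 := finrank_directSum (R := ℚ) (fun v : Fin m => ↥(B.grading ((v : ℕ) : ℤ)))
  rw [← Fin.sum_univ_eq_sum_range (fun v => finrank ℚ (B.grading v)) m, ← h2]
  exact this

theorem exists_bound (B : CDGA) [FiniteDimensional ℚ B.carrier] :
    ∃ m : ℕ, 1 ≤ m ∧ ∀ v : ℕ, m ≤ v → finrank ℚ (B.grading v) = 0 := by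
  have hfin := Submodule.finite_ne_bot_of_iSupIndep B.internal.submodule_iSupIndep
  obtain ⟨M, hM⟩ := hfin.bddAbove
  refine ⟨(M + 1).toNat + 1, by omega, fun v hv => ?_⟩
  have : B.grading v = ⊥ := by
    by_contra h
    have := hM h
    omega
  rw [this, finrank_bot]

variable {A : CDGA} {ι : Type} [Fintype ι] [DecidableEq ι] {l : List ι}
    {deg : ι → ℤ} {g : ι → A.carrier}

theorem Gens.one_ne (G : Gens A l deg g) : (1 : A.carrier) ≠ 0 := by
  have := G.li.ne_zero (⟨0, fun _ _ => Nat.zero_le _⟩ : Adm deg)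
  simpa [mon] using this

open Classical in
theorem Gens.trc (G : Gens A l deg g) (hdec : ∀ x, A.d (g x) ∈ A.decomposables)
    (hform : A.IsFormal) (hfd : FiniteDimensional ℚ A.Hspace) :
    2 ^ ((Finset.univ.filter fun x => Odd (deg x)).card -
      (Finset.univ.filter fun x => ¬ Odd (deg x)).card) ≤ finrank ℚ A.Hspace := by
  obtain ⟨B, φ, hB, hφ⟩ := G.exists_formal hdec hform
  obtain ⟨α, h1, h2, h3⟩ := G.exists_alpha hdec hB hφ
  obtain ⟨g', w, G', hw, hgw⟩ := G.exists_weights hdec hφ h1 h2 h3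
  obtain ⟨eqv⟩ := finrank_H hB hφ
  have : FiniteDimensional ℚ B.carrier := eqv.finiteDimensional
  obtain ⟨m, hm1, hm⟩ := exists_bound B
  obtain ⟨F, hF1, hF2⟩ := exists_poly (deg := deg) hw (fun v => finrank ℚ (B.grading v)) m hm
    (fun v => G'.euler hB hφ h2 h3 h1 hw hgw v)
  have hdvd := arith _ _ w hw ((∑ x, w x) + 1)
    (fun x => Nat.lt_succ_of_le (Finset.single_le_sum (fun _ _ => Nat.zero_le _)
      (Finset.mem_univ x))) F hF2
  rw [hF1, ← Nat.cast_sum] at hdvd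
  have hdvd' : 2 ^ ((Finset.univ.filter fun x => Odd (deg x)).card -
      (Finset.univ.filter fun x => ¬ Odd (deg x)).card) ∣
      ∑ v ∈ Finset.range m, finrank ℚ (B.grading v) := by exact_mod_cast hdvd
  have hone : (1 : B.carrier) ≠ 0 := by
    intro h0
    have hd1 : A.d 1 = 0 := by
      have := A.leibniz A.one_mem 1
      simpa using this
    have h4 : (1 : A.carrier) ∈ LinearMap.range A.d :=
      hφ.1 1 hd1 (by rw [map_one, h0]; exact Submodule.zero_mem _)
    obtain ⟨y, hy⟩ := h4
    have h5 := proj_comm A.internal A.internal A.d 1 (fun n y hy => A.d_mem hy) (-1) y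
    have h6 : proj A.internal (-1) y = 0 := by
      have := proj_mem A.internal (-1) y
      rwa [A.nonneg (-1) (by omega), Submodule.mem_bot] at this
    rw [h6, map_zero, hy, show (-1 : ℤ) + 1 = 0 by norm_num, proj_same A.internal A.one_mem] at h5
    exact G.one_ne h5.symm
  have hpos : 0 < ∑ v ∈ Finset.range m, finrank ℚ (B.grading v) := by
    refine Finset.sum_pos' (fun _ _ => Nat.zero_le _) ⟨0, Finset.mem_range.2 hm1, ?_⟩
    rw [finrank_pos_iff_exists_ne_zero]
    exact ⟨⟨1, B.one_mem⟩, fun h => hone (congrArg Subtype.val h)⟩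
  rw [eqv.finrank_eq]
  exact (Nat.le_of_dvd hpos hdvd').trans (sum_finrank_le B m)

end Final

end TRC

set_option linter.unusedSectionVars false
set_option linter.deprecated false
set_option linter.unusedSimpArgs false

namespace TRC

/-! ### Generators of an elliptic Sullivan algebra -/

section Sull

open Module

theorem prod_filter_map {ι R : Type} [Ring R] (p : ι → Prop) [DecidablePred p] (f : ι → R)
    (hf : ∀ x, ¬ p x → f x = 1) : ∀ l : List ι, ((l.filter p).map f).prod = (l.map f).prod
  | [] => rfl
  | x :: l => by
    have ih := prod_filter_map p f hf l
    by_cases h : p x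
    · rw [List.filter_cons_of_pos (by simpa using h), List.map_cons, List.prod_cons, ih,
        List.map_cons, List.prod_cons]
    · rw [List.filter_cons_of_neg (by simpa using h), ih, List.map_cons, List.prod_cons, hf x h,
        one_mul]

theorem monomialIn_eq {ι R : Type} [Ring R] [Fintype ι] (lo : LinearOrder ι) (g : ι → R)
    (e : ι →₀ ℕ) : monomialIn lo g e = mon ((Finset.univ : Finset ι).sort (· ≤ ·)) g e := by
  unfold monomialIn mon
  have h1 : e.support.sort (· ≤ ·) =
      ((Finset.univ : Finset ι).sort (· ≤ ·)).filter (fun x => x ∈ e.support) := by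
    refine List.Perm.eq_of_pairwise' (Finset.pairwise_sort _ _)
      ((Finset.pairwise_sort _ _).filter _) ?_
    rw [List.perm_ext_iff_of_nodup (Finset.sort_nodup _ _) ((Finset.sort_nodup _ _).filter _)]
    intro x
    simp
  rw [h1, prod_filter_map]
  intro x hx
  rw [Finsupp.notMem_support_iff.1 hx, pow_zero]

theorem monomialIn_single {ι R : Type} [Ring R] (lo : LinearOrder ι) (g : ι → R) (x : ι) :
    monomialIn lo g (Finsupp.single x 1) = g x := by
  unfold monomialIn
  rw [Finsupp.support_single_ne_zero x one_ne_zero]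
  simp

open Classical in
theorem finsum_dim {ι : Type} [Fintype ι] {M : Type} [AddCommGroup M] [Module ℚ M]
    {V : ℤ → Submodule ℚ M} {deg : ι → ℤ} {g : ι → M}
    (hV : ∀ i : ℤ, V i = Submodule.span ℚ (g '' {x : ι | deg x = i}))
    (hg : LinearIndependent ℚ g) (P : ℤ → Prop) [DecidablePred P] :
    (finsum fun i : ℤ => if P i then finrank ℚ (V i) else 0) =
      (Finset.univ.filter fun x => P (deg x)).card := by
  have hr : ∀ i, finrank ℚ (V i) = (Finset.univ.filter fun x => deg x = i).card := by
    intro i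
    have h1 := finrank_span_eq_card (hg.comp (Subtype.val : {x // deg x = i} → ι)
      Subtype.val_injective)
    rw [hV i, ← Fintype.card_subtype, ← h1, Set.range_comp, Subtype.range_coe_subtype]
  rw [finsum_eq_sum_of_support_subset (s := Finset.univ.image deg)]
  · rw [Finset.card_eq_sum_card_fiberwise (f := deg) (t := Finset.univ.image deg)
      (fun x _ => by simp)]
    refine Finset.sum_congr rfl fun i _ => ?_
    rw [Finset.filter_filter]
    split_ifs with h
    · rw [hr]
      congr 1
      ext x
      simp only [Finset.mem_filter, Finset.mem_univ, true_and]
      exact ⟨fun hx => ⟨hx ▸ h, hx⟩, fun hx => hx.2⟩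
    · symm
      rw [Finset.card_eq_zero, Finset.filter_eq_empty_iff]
      rintro x _ ⟨hx1, hx2⟩
      exact h (hx2 ▸ hx1)
  · intro i hi
    rw [Function.mem_support] at hi
    by_contra hn
    apply hi
    rw [hr]
    have : (Finset.univ.filter fun x => deg x = i) = ∅ := by
      rw [Finset.filter_eq_empty_iff]
      intro x _ hx
      exact hn (by simpa using ⟨x, hx⟩)
    simp [this]

theorem main (A : SullivanAlgebra)
    (hmin : A.IsMinimal) (hell : A.Elliptic) (hformal : A.toCDGA.IsFormal) :
    2 ^ (A.oddDim - A.evenDim) ≤ Module.finrank ℚ A.toCDGA.Hspace := by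
  classical
  obtain ⟨ι, lo, deg, g, hgV, hV, hli, hsp⟩ := A.free
  obtain ⟨⟨N, hN⟩, hfd⟩ := hell
  have hg : LinearIndependent ℚ g := by
    have := hli.comp (fun x : ι => (⟨Finsupp.single x 1, fun y _ => by
      rw [Finsupp.single_apply]; split_ifs <;> omega⟩ :
      {e : ι →₀ ℕ // ∀ x : ι, Odd (deg x) → e x ≤ 1})) (by
        intro x y h
        exact Finsupp.single_left_injective one_ne_zero (congrArg Subtype.val h))
    convert this using 1
    funext x
    exact (monomialIn_single lo g x).symm
  have hdeg : ∀ x, 2 ≤ deg x := by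
    intro x
    by_contra h
    have h1 := hgV x
    rw [A.V_lower (deg x) (by omega), Submodule.mem_bot] at h1
    exact hg.ne_zero x h1
  have hdegN : ∀ x, deg x ≤ N := by
    intro x
    by_contra h
    have h1 := hgV x
    rw [hN (deg x) (by omega), Submodule.mem_bot] at h1
    exact hg.ne_zero x h1
  have hfin : Finite ι := by
    have h1 : ∀ i, {x | deg x = i}.Finite := by
      intro i
      have := A.V_findim i
      have h2 : LinearIndependent ℚ (fun x : {x // deg x = i} =>
          (⟨g x.1, by have h := hgV x.1; rwa [x.2] at h⟩ : A.V i)) := by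
        apply LinearIndependent.of_comp (A.V i).subtype
        exact hg.comp (Subtype.val : {x // deg x = i} → ι) Subtype.val_injective
      exact h2.finite
    have h2 : (Set.univ : Set ι) ⊆ ⋃ i ∈ Finset.Icc 2 N, {x | deg x = i} := by
      intro x _
      simp only [Set.mem_iUnion]
      exact ⟨deg x, Finset.mem_Icc.2 ⟨hdeg x, hdegN x⟩, rfl⟩
    exact Set.finite_univ_iff.1
      ((Set.Finite.biUnion (Finset.finite_toSet _) fun i _ => h1 i).subset h2)
  have := Fintype.ofFinite ι
  let toF : Adm deg → {e : ι →₀ ℕ // ∀ x : ι, Odd (deg x) → e x ≤ 1} :=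
    fun e => ⟨Finsupp.equivFunOnFinite.symm e.1, e.2⟩
  have htoF : ∀ e : Adm deg, monomialIn lo g (toF e).1 =
      mon ((Finset.univ : Finset ι).sort (· ≤ ·)) g e.1 := fun e => monomialIn_eq lo g _
  have G : Gens A.toCDGA ((Finset.univ : Finset ι).sort (· ≤ ·)) deg g := by
    refine ⟨Finset.sort_nodup _ _, fun x => by simp, hdeg, fun x => A.V_le _ (hgV x), ?_, ?_⟩
    · have h1 := hli.comp toF (by
        intro e e' h
        exact Subtype.ext (Finsupp.equivFunOnFinite.symm.injective (congrArg Subtype.val h)))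
      convert h1 using 1
      funext e
      exact (htoF e).symm
    · refine hsp.trans (Submodule.span_mono ?_)
      rintro _ ⟨e, rfl⟩
      refine ⟨(⟨e.1, e.2⟩ : Adm deg), ?_⟩
      exact (monomialIn_eq lo g e.1).symm
  have key := G.trc (fun x => hmin (deg x) (g x) (hgV x)) hformal hfd
  have ho : A.oddDim = (Finset.univ.filter fun x => Odd (deg x)).card := by
    unfold SullivanAlgebra.oddDim
    convert finsum_dim hV hg (fun i => Odd i)
  have he : A.evenDim = (Finset.univ.filter fun x => ¬ Odd (deg x)).card := by
    unfold SullivanAlgebra.evenDim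
    have := finsum_dim hV hg (fun i => Even i)
    simp only [Int.not_odd_iff_even]
    convert this
  rw [ho, he]
  convert key

end Sull

end TRC
/-- **The toral rank conjecture for formal elliptic spaces** (Corollary 5.3,
after Kotani–Yamaguchi): if `(ΛV, d)` is a formal elliptic minimal Sullivan
algebra over `ℚ`, then `dim_ℚ H^*(ΛV, d) ≥ 2^(dim V^odd - dim V^even)`. -/
theorem formal_elliptic_trc (A : SullivanAlgebra)
    (hmin : A.IsMinimal) (hell : A.Elliptic) (hformal : A.toCDGA.IsFormal) :
    2 ^ (A.oddDim - A.evenDim) ≤ Module.finrank ℚ A.toCDGA.Hspace := by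
  exact TRC.main A hmin hell hformal
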